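/- arXiv:1111.7263 — 2 statements merged into one kernel-verified Lean document; each statement's English description precedes it below -/
import Mathlib

section
/- Let k be a field of characteristic 0, let 1 ≤ t ≤ m ≤ n, and let D ≥ 2. If J_t(m, m+t) is generated in degrees ≤ D, then J_t(m,n) is generated in degrees ≤ D. In particular, the maximal degree of a minimal generator of J_t(m,n) is at most the maximal degree of a minimal generator of J_t(m, m+t). -/
open MvPolynomial

/-- The `t`-minor `[I|J]` of the generic `m × n` matrix. -/
noncomputable def genericMinor (k : Type*) [CommRing k] (m n t : ℕ)
    (I : Finset (Fin m)) (J : Finset (Fin n)) (hI : I.card = t) (hJ : J.card = t) :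
    MvPolynomial (Fin m × Fin n) k :=
  Matrix.det (Matrix.of fun a b : Fin t =>
    MvPolynomial.X ((↑(I.orderIsoOfFin hI a) : Fin m), (↑(J.orderIsoOfFin hJ b) : Fin n)))

/-- Index set for the `t`-minors of an `m × n` matrix: pairs `(I, J)` of a `t`-element set
of rows and a `t`-element set of columns. -/
def MinorIndex (t m n : ℕ) : Type :=
  {p : Finset (Fin m) × Finset (Fin n) // p.1.card = t ∧ p.2.card = t}

/-- The presentation map `π : S_t(m,n) → R(m,n)`, sending the indeterminate `y_{I,J}`
to the `t`-minor `[I|J]`. -/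
noncomputable def minorPresentation (k : Type*) [CommRing k] (t m n : ℕ) :
    MvPolynomial (MinorIndex t m n) k →ₐ[k] MvPolynomial (Fin m × Fin n) k :=
  MvPolynomial.aeval fun p => genericMinor k m n t p.1.1 p.1.2 p.2.1 p.2.2

/-- `J_t(m,n)`: the ideal of relations of the `t`-minors of the generic `m × n` matrix. -/
noncomputable def minorRelations (k : Type*) [CommRing k] (t m n : ℕ) :
    Ideal (MvPolynomial (MinorIndex t m n) k) :=
  RingHom.ker (minorPresentation k t m n).toRingHom

/-- An ideal of a polynomial ring is generated in degrees `≤ D` if it is generated by its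
elements of total degree at most `D`. -/
def GeneratedInDegreesLE {k σ : Type*} [CommRing k]
    (I : Ideal (MvPolynomial σ k)) (D : ℕ) : Prop :=
  I = Ideal.span {x | x ∈ I ∧ x.totalDegree ≤ D}


theorem mr_exists_rep {ι : Type*} [Fintype ι] (U : Submodule ℚ (ι → ℚ)) (w : ι → ℚ) :
    ∃ u ∈ U, ∀ v ∈ U, ∑ i, v i * u i = ∑ i, v i * w i := by
  classical
  let T0 : (ι → ℚ) →ₗ[ℚ] Module.Dual ℚ U :=
    LinearMap.mk₂ ℚ (fun (u : ι → ℚ) (v : U) => ∑ i, v.1 i * u i)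
      (by intro a b c; simp [mul_add, Finset.sum_add_distrib])
      (by intro r a b; simp only [Pi.smul_apply, smul_eq_mul, Finset.mul_sum]
          exact Finset.sum_congr rfl fun i _ => by ring)
      (by intro a b c; simp [add_mul, Finset.sum_add_distrib])
      (by intro r a b; simp only [Submodule.coe_smul, Pi.smul_apply, smul_eq_mul, Finset.mul_sum]
          exact Finset.sum_congr rfl fun i _ => by ring)
  let T : U →ₗ[ℚ] Module.Dual ℚ U := T0.comp U.subtype
  have hinj : Function.Injective T := by
    rw [injective_iff_map_eq_zero]
    intro u hu
    have h1 : ∑ i, u.1 i * u.1 i = 0 := by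
      have := LinearMap.congr_fun hu u
      simpa [T, T0] using this
    rw [Finset.sum_eq_zero_iff_of_nonneg (fun i _ => mul_self_nonneg _)] at h1
    ext i
    simpa using h1 i (Finset.mem_univ i)
  have hsurj : Function.Surjective T :=
    (LinearMap.injective_iff_surjective_of_finrank_eq_finrank
      (Subspace.dual_finrank_eq (K := ℚ) (V := U)).symm).1 hinj
  obtain ⟨u, hu⟩ := hsurj (T0 w)
  refine ⟨u.1, u.2, fun v hv => ?_⟩
  have := LinearMap.congr_fun hu ⟨v, hv⟩
  simpa [T, T0] using this

theorem mr_key_rat (p n q : ℕ) :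
    ∃ c : (Matrix (Fin n) (Fin p) ℚ × Matrix (Fin p) (Fin n) ℚ) →₀ ℚ,
      ∀ (A : Matrix (Fin n) (Fin p) ℚ) (B : Matrix (Fin p) (Fin n) ℚ),
        c.sum (fun φ r => r * (∑ x : Fin n × Fin n, (A * B) x.1 x.2 * (φ.1 * φ.2) x.1 x.2) ^ q)
          = (∑ x : Fin n × Fin n, (A * B) x.1 x.2 * (1 : Matrix (Fin n) (Fin n) ℚ) x.1 x.2) ^ q := by
  classical
  let vec : Matrix (Fin n) (Fin n) ℚ → ((Fin q → Fin n × Fin n) → ℚ) :=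
    fun φ s => ∏ i, φ (s i).1 (s i).2
  have hdot : ∀ M N, ∑ s, vec M s * vec N s
      = (∑ x : Fin n × Fin n, M x.1 x.2 * N x.1 x.2) ^ q := by
    intro M N
    rw [Fintype.sum_pow]
    simp [vec, Finset.prod_mul_distrib]
  let f : (Matrix (Fin n) (Fin p) ℚ × Matrix (Fin p) (Fin n) ℚ) → _ := fun φ => vec (φ.1 * φ.2)
  obtain ⟨u, hu, h⟩ := mr_exists_rep (Submodule.span ℚ (Set.range f)) (vec 1)
  obtain ⟨c, hc⟩ := Finsupp.mem_span_range_iff_exists_finsupp.1 hu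
  refine ⟨c, fun A B => ?_⟩
  have h1 := h (f (A, B)) (Submodule.subset_span ⟨_, rfl⟩)
  rw [hdot] at h1
  rw [← h1, ← hc]
  simp only [Finsupp.sum, Finset.sum_apply, Pi.smul_apply, smul_eq_mul, Finset.mul_sum]
  rw [Finset.sum_comm]
  refine Finset.sum_congr rfl fun φ _ => ?_
  rw [← hdot, Finset.mul_sum]
  exact Finset.sum_congr rfl fun s _ => by simp only [f]; ring

theorem mr_iter_pderiv {q : ℕ} (x : Fin q → ℚ) (l : List (Fin q)) (N : ℕ) :
    l.foldr (fun a P => pderiv a P) ((∑ j, C (x j) * X j : MvPolynomial (Fin q) ℚ) ^ N)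
      = C ((N.descFactorial l.length : ℚ) * (l.map x).prod) *
        (∑ j, C (x j) * X j : MvPolynomial (Fin q) ℚ) ^ (N - l.length) := by
  induction l with
  | nil => simp
  | cons a l ih =>
    rw [List.foldr_cons, ih]
    have h1 : pderiv a (∑ j, C (x j) * X j : MvPolynomial (Fin q) ℚ) = C (x a) := by
      simp [Derivation.leibniz, pderiv_X, Pi.single_apply]
    rw [Derivation.leibniz, pderiv_C, Derivation.leibniz_pow, h1]
    simp only [List.length_cons, Nat.descFactorial_succ, List.map_cons, List.prod_cons,
      smul_eq_mul, nsmul_eq_mul, Nat.cast_mul, C_mul, map_natCast, Nat.sub_sub]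
    ring

theorem mr_polar {q : ℕ} {ι : Type*} (s : Finset ι) (c : ι → ℚ) (x : ι → Fin q → ℚ)
    (x0 : Fin q → ℚ)
    (h : ∀ y : Fin q → ℚ, ∑ i ∈ s, c i * (∑ j, x i j * y j) ^ q = (∑ j, x0 j * y j) ^ q) :
    ∑ i ∈ s, c i * ∏ j, x i j = ∏ j, x0 j := by
  have h1 : ∑ i ∈ s, c i • (∑ j, C (x i j) * X j : MvPolynomial (Fin q) ℚ) ^ q
      = (∑ j, C (x0 j) * X j : MvPolynomial (Fin q) ℚ) ^ q := by
    apply MvPolynomial.funext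
    intro y
    simpa [smul_eval] using h y
  have hlin : ∀ l : List (Fin q), ∃ L : MvPolynomial (Fin q) ℚ →ₗ[ℚ] MvPolynomial (Fin q) ℚ,
      ∀ P, L P = l.foldr (fun a P => pderiv a P) P := by
    intro l
    induction l with
    | nil => exact ⟨LinearMap.id, fun P => rfl⟩
    | cons a l ih =>
      obtain ⟨L, hL⟩ := ih
      exact ⟨(pderiv a).toLinearMap.comp L, fun P => by simp [hL]⟩
  obtain ⟨L, hL⟩ := hlin (List.finRange q)
  have h2 := congrArg L h1
  simp only [map_sum, map_smul] at h2
  simp only [hL, mr_iter_pderiv, List.length_finRange, Nat.sub_self, pow_zero,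
    mul_one, Nat.descFactorial_self, smul_eq_C_mul, ← C_mul, ← map_sum] at h2
  have h3 := C_injective _ _ h2
  have hf : (q.factorial : ℚ) ≠ 0 := by exact_mod_cast q.factorial_ne_zero
  apply mul_left_cancel₀ hf
  have e : ∀ z : Fin q → ℚ, ((List.finRange q).map z).prod = ∏ j, z j := by
    intro z; rw [← List.ofFn_eq_map, List.prod_ofFn]
  simp only [e] at h3
  rw [← h3, Finset.mul_sum]
  exact Finset.sum_congr rfl fun i _ => by ring

theorem mr_key_tuple (p n q : ℕ) :
    ∃ c : (Matrix (Fin n) (Fin p) ℚ × Matrix (Fin p) (Fin n) ℚ) →₀ ℚ,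
      ∀ (Z : Matrix (Fin p) (Fin n) ℚ) (a : Fin q → Fin p) (b : Fin q → Fin n),
        ∑ φ ∈ c.support, c φ * ∏ j, (Z * φ.1 * φ.2) (a j) (b j) = ∏ j, Z (a j) (b j) := by
  classical
  obtain ⟨c, hc⟩ := mr_key_rat p n q
  refine ⟨c, fun Z a b => mr_polar _ _ _ _ fun y => ?_⟩
  have key : ∀ ψ : Matrix (Fin n) (Fin n) ℚ,
      ∑ x : Fin n × Fin n, (Z.transpose * (Matrix.of fun a' b' => ∑ j, if a j = a' ∧ b j = b' then y j else 0 : Matrix (Fin p) (Fin n) ℚ)) x.1 x.2 * ψ x.1 x.2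
        = ∑ j, (Z * ψ) (a j) (b j) * y j := by
    intro ψ
    simp only [Matrix.mul_apply, Matrix.of_apply, Matrix.transpose_apply, Fintype.sum_prod_type,
      Finset.sum_mul, Finset.mul_sum]
    have : ∀ l b', ∑ a', ∑ j, Z a' l * (if a j = a' ∧ b j = b' then y j else 0) * ψ l b'
        = ∑ j, if b j = b' then Z (a j) l * ψ l b' * y j else 0 := by
      intro l b'
      rw [Finset.sum_comm]
      refine Finset.sum_congr rfl fun j _ => ?_
      rw [Finset.sum_eq_single (a j)]
      · by_cases hb : b j = b' <;> simp [hb]; ring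
      · intro a' _ h; simp [Ne.symm h]
      · simp
    simp only [this]
    have h2 : ∀ l, ∑ b', ∑ j, (if b j = b' then Z (a j) l * ψ l b' * y j else 0)
        = ∑ j, Z (a j) l * ψ l (b j) * y j := by
      intro l
      rw [Finset.sum_comm]
      simp
    simp only [h2]
    rw [Finset.sum_comm]
  have := hc Z.transpose (Matrix.of fun a' b' => ∑ j, if a j = a' ∧ b j = b' then y j else 0)
  simp only [Finsupp.sum, key, ← Matrix.mul_assoc, Matrix.mul_one] at this
  exact this

universe u

theorem mr_monomial_tuple {σ : Type*} (k : Type*) [CommRing k] (s : σ →₀ ℕ) (q : ℕ)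
    (hs : s.degree = q) : ∃ f : Fin q → σ, (monomial s (1 : k)) = ∏ j, X (f j) := by
  classical
  subst hs
  have hl : s.toMultiset.toList.length = s.degree := by
    rw [Multiset.length_toList, Finsupp.card_toMultiset]; rfl
  refine ⟨fun j => s.toMultiset.toList.get (j.cast hl.symm), ?_⟩
  have h1 : ∏ j : Fin s.degree, (X (s.toMultiset.toList.get (j.cast hl.symm)) : MvPolynomial σ k)
      = (s.toMultiset.toList.map X).prod := by
    rw [← List.prod_ofFn]
    congr 1
    apply List.ext_get
    · simp [hl]
    · intro i h1 h2; simp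
  rw [h1]
  rw [← Multiset.prod_coe, ← Multiset.map_coe, Multiset.coe_toList, Finsupp.toMultiset_map,
    Finsupp.prod_toMultiset, Finsupp.prod_mapDomain_index (by simp) (by intros; rw [pow_add]),
    monomial_eq, C_1, one_mul]

/-- substitution of columns -/
noncomputable def mrTau {k : Type*} [CommRing k] (r : ℕ) {n n' : ℕ}
    (φ : Matrix (Fin n') (Fin n) k) :
    MvPolynomial (Fin r × Fin n) k →ₐ[k] MvPolynomial (Fin r × Fin n') k :=
  aeval fun x => ∑ l, X (x.1, l) * C (φ l x.2)

theorem mr_key (k : Type*) [Field k] [CharZero k] (p n q : ℕ) :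
    ∃ c : (Matrix (Fin n) (Fin p) ℚ × Matrix (Fin p) (Fin n) ℚ) →₀ ℚ,
      ∀ g : MvPolynomial (Fin p × Fin n) k, g.IsHomogeneous q →
        ∑ φ ∈ c.support, (c φ : k) • mrTau p (φ.1.map (Rat.castHom k))
          (mrTau p (φ.2.map (Rat.castHom k)) g) = g := by
  classical
  obtain ⟨c, hc⟩ := mr_key_tuple p n q
  refine ⟨c, fun g hg => ?_⟩
  have hQ : ∀ f : Fin q → Fin p × Fin n,
      ∑ φ ∈ c.support, C (c φ) * ∏ j, ∑ l, (∑ l', X ((f j).1, l') * C (φ.1 l' l)) * C (φ.2 l (f j).2)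
        = ∏ j, (X (f j) : MvPolynomial (Fin p × Fin n) ℚ) := by
    intro f
    apply MvPolynomial.funext
    intro x
    have := hc (Matrix.of fun a b => x (a, b)) (fun j => (f j).1) (fun j => (f j).2)
    simpa [Matrix.mul_apply, map_sum, map_prod] using this
  have hK : ∀ f : Fin q → Fin p × Fin n,
      ∑ φ ∈ c.support, (c φ : k) • mrTau p (φ.1.map (Rat.castHom k))
          (mrTau p (φ.2.map (Rat.castHom k)) (∏ j, X (f j))) = ∏ j, X (f j) := by
    intro f
    have := congrArg (MvPolynomial.map (Rat.castHom k)) (hQ f)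
    simpa [mrTau, map_sum, map_prod, smul_eq_C_mul] using this
  let L : MvPolynomial (Fin p × Fin n) k →ₗ[k] MvPolynomial (Fin p × Fin n) k :=
    ∑ φ ∈ c.support, (c φ : k) • (mrTau p (φ.1.map (Rat.castHom k))).toLinearMap.comp
          (mrTau p (φ.2.map (Rat.castHom k))).toLinearMap
  have hL : ∀ P, L P = ∑ φ ∈ c.support, (c φ : k) • mrTau p (φ.1.map (Rat.castHom k))
          (mrTau p (φ.2.map (Rat.castHom k)) P) := by
    intro P; simp [L]
  rw [← hL]
  simp only [← hL] at hK
  conv_lhs => rw [g.as_sum]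
  conv_rhs => rw [g.as_sum]
  rw [map_sum]
  refine Finset.sum_congr rfl fun s hs => ?_
  obtain ⟨f, hf⟩ := mr_monomial_tuple k s q (by
    by_contra h
    exact (mem_support_iff.1 hs) (hg.coeff_eq_zero h))
  have : monomial s (coeff s g) = coeff s g • monomial s (1 : k) := by
    rw [smul_monomial, smul_eq_mul, mul_one]
  rw [this, map_smul, hf, hK]

/-- column sets -/
def MrCol (t n : ℕ) : Type := {J : Finset (Fin n) // J.card = t}

noncomputable instance (t n : ℕ) : Fintype (MrCol t n) := by
  classical
  unfold MrCol; infer_instance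

noncomputable instance (t n : ℕ) : DecidableEq (MrCol t n) := Classical.decEq _

noncomputable instance (t m n : ℕ) : Fintype (MinorIndex t m n) := by
  classical
  unfold MinorIndex; infer_instance

noncomputable instance (t m n : ℕ) : DecidableEq (MinorIndex t m n) := Classical.decEq _

/-- maximal minor on given columns -/
noncomputable def mrDet {t n : ℕ} {B : Type*} [CommRing B] (Z : Fin t → Fin n → B)
    (K : MrCol t n) : B :=
  Matrix.det (Matrix.of fun a b : Fin t => Z a (K.1.orderIsoOfFin K.2 b : Fin n))

theorem mr_det_tuple {t n : ℕ} (k : Type u) [CommRing k] (s : Fin t → Fin n) :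
    ∃ c : MrCol t n → k, ∀ (B : Type u) [CommRing B] [Algebra k B] (Z : Fin t → Fin n → B),
      Matrix.det (Matrix.of fun a b : Fin t => Z a (s b))
        = ∑ K, algebraMap k B (c K) * mrDet Z K := by
  classical
  by_cases hs : Function.Injective s
  · let K0 : MrCol t n := ⟨Finset.univ.image s, by
      rw [Finset.card_image_of_injective _ hs]; simp⟩
    have hmem : ∀ b, s b ∈ K0.1 := fun b => Finset.mem_image_of_mem _ (Finset.mem_univ _)
    let e0 : Fin t → Fin t := fun b => (K0.1.orderIsoOfFin K0.2).symm ⟨s b, hmem b⟩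
    have hinj : Function.Injective e0 := by
      intro a b h
      have := (K0.1.orderIsoOfFin K0.2).symm.injective h
      exact hs (Subtype.mk.inj this)
    let e : Equiv.Perm (Fin t) := Equiv.ofBijective e0 (Finite.injective_iff_bijective.1 hinj)
    have he : ∀ b, (K0.1.orderIsoOfFin K0.2 (e b) : Fin n) = s b := by
      intro b; simp [e, e0]
    refine ⟨Pi.single K0 ((Equiv.Perm.sign e : ℤ) : k), fun B _ _ Z => ?_⟩
    rw [Finset.sum_eq_single K0]
    · have h := Matrix.det_permute' e (Matrix.of fun a b : Fin t => Z a (K0.1.orderIsoOfFin K0.2 b : Fin n))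
      simp only [Pi.single_eq_same, map_intCast, mrDet]
      rw [← h]
      congr 1
      ext a b
      exact congrArg (Z a) (he b).symm
    · intro K _ hK; simp [Pi.single_eq_of_ne hK]
    · simp
  · refine ⟨0, fun B _ _ Z => ?_⟩
    simp only [Function.Injective] at hs
    push Not at hs
    obtain ⟨a, b, hab, hne⟩ := hs
    rw [Matrix.det_zero_of_column_eq hne (by intro i; simp [hab])]
    simp

theorem mr_cb {t n n' : ℕ} {k : Type u} [CommRing k] (φ : Matrix (Fin n') (Fin n) k)
    (J : MrCol t n) :
    ∃ c : MrCol t n' → k, ∀ (B : Type u) [CommRing B] [Algebra k B] (Z : Fin t → Fin n' → B),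
      mrDet (fun a j => ∑ l, Z a l * algebraMap k B (φ l j)) J
        = ∑ K, algebraMap k B (c K) * mrDet Z K := by
  classical
  choose d hd using fun s : Fin t → Fin n' => mr_det_tuple k s
  refine ⟨fun K => ∑ s : Fin t → Fin n',
    (∏ b, φ (s b) (J.1.orderIsoOfFin J.2 b)) * d s K, fun B _ _ Z => ?_⟩
  have h1 : mrDet (fun a j => ∑ l, Z a l * algebraMap k B (φ l j)) J
      = ∑ s : Fin t → Fin n', (∏ b, algebraMap k B (φ (s b) (J.1.orderIsoOfFin J.2 b))) *
        Matrix.det (Matrix.of fun a b : Fin t => Z a (s b)) := by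
    rw [mrDet, ← Matrix.det_transpose]
    have h2 := (Matrix.detRowAlternating (n := Fin t) (R := B)).toMultilinearMap.map_sum
      (g := fun (b : Fin t) (l : Fin n') =>
        algebraMap k B (φ l (J.1.orderIsoOfFin J.2 b)) • fun a => Z a l)
    have h3 : (fun (b : Fin t) => ∑ l : Fin n',
        (algebraMap k B (φ l (J.1.orderIsoOfFin J.2 b)) • fun a => Z a l)) =
        (Matrix.of fun a b : Fin t => ∑ l, Z a l * algebraMap k B (φ l (J.1.orderIsoOfFin J.2 b))).transpose := by
      ext b a
      simp only [Finset.sum_apply, Pi.smul_apply, smul_eq_mul, Matrix.transpose_apply, Matrix.of_apply]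
      exact Finset.sum_congr rfl fun l _ => mul_comm _ _
    rw [h3] at h2
    refine h2.trans ?_
    refine Finset.sum_congr rfl fun s _ => ?_
    rw [MultilinearMap.map_smul_univ, smul_eq_mul, ← Matrix.det_transpose]
    rfl
  rw [h1]
  simp only [hd, map_sum, map_mul, map_prod, Finset.mul_sum, Finset.sum_mul]
  rw [Finset.sum_comm]
  exact Finset.sum_congr rfl fun K _ => Finset.sum_congr rfl fun s _ => by ring

/-- coefficients of the expansion of minors of a product -/
noncomputable def mrCoef {t n n' : ℕ} {k : Type u} [CommRing k] (φ : Matrix (Fin n') (Fin n) k)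
    (J : MrCol t n) : MrCol t n' → k := (mr_cb φ J).choose

theorem mrCoef_spec {t n n' : ℕ} {k : Type u} [CommRing k] (φ : Matrix (Fin n') (Fin n) k)
    (J : MrCol t n) (B : Type u) [CommRing B] [Algebra k B] (Z : Fin t → Fin n' → B) :
      mrDet (fun a j => ∑ l, Z a l * algebraMap k B (φ l j)) J
        = ∑ K, algebraMap k B (mrCoef φ J K) * mrDet Z K :=
  (mr_cb φ J).choose_spec B Z

/-- index from rows and columns -/
def mrIdx {t m n : ℕ} (I : MrCol t m) (J : MrCol t n) : MinorIndex t m n :=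
  ⟨(I.1, J.1), I.2, J.2⟩

/-- rows of an index -/
def mrRow {t m n : ℕ} (p : MinorIndex t m n) : MrCol t m := ⟨p.1.1, p.2.1⟩

/-- columns of an index -/
def mrColOf {t m n : ℕ} (p : MinorIndex t m n) : MrCol t n := ⟨p.1.2, p.2.2⟩

theorem mr_map_det {t n : ℕ} {B B' : Type*} [CommRing B] [CommRing B'] (F : B →+* B')
    (Z : Fin t → Fin n → B) (K : MrCol t n) :
    F (mrDet Z K) = mrDet (fun a j => F (Z a j)) K := by
  rw [mrDet, RingHom.map_det]; rfl

/-- substitution on the presentation side -/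
noncomputable def mrSg {k : Type u} [CommRing k] (t m : ℕ) {n n' : ℕ}
    (φ : Matrix (Fin n') (Fin n) k) :
    MvPolynomial (MinorIndex t m n) k →ₐ[k] MvPolynomial (MinorIndex t m n') k :=
  aeval fun p => ∑ K, C (mrCoef φ (mrColOf p) K) * X (mrIdx (mrRow p) K)

theorem mr_pres_X {k : Type u} [CommRing k] (t m n : ℕ) (p : MinorIndex t m n) :
    minorPresentation k t m n (X p)
      = mrDet (fun a j => X (((mrRow p).1.orderIsoOfFin (mrRow p).2 a : Fin m), j)) (mrColOf p) := by
  rw [minorPresentation, aeval_X]; rfl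

theorem mr_pres_sg {k : Type u} [CommRing k] (t m : ℕ) {n n' : ℕ}
    (φ : Matrix (Fin n') (Fin n) k) (f : MvPolynomial (MinorIndex t m n) k) :
    minorPresentation k t m n' (mrSg t m φ f) = mrTau m φ (minorPresentation k t m n f) := by
  have : (minorPresentation k t m n').comp (mrSg t m φ)
      = (mrTau m φ).comp (minorPresentation k t m n) := by
    apply MvPolynomial.algHom_ext
    intro p
    rw [AlgHom.comp_apply, AlgHom.comp_apply, mr_pres_X]
    have h := mr_map_det (mrTau m φ).toRingHom (fun a j => X (((mrRow p).1.orderIsoOfFin (mrRow p).2 a : Fin m), j)) (mrColOf p)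
    refine Eq.trans ?_ h.symm
    have h2 : (fun (a : Fin t) (j : Fin n) => (mrTau m φ).toRingHom (X (((mrRow p).1.orderIsoOfFin (mrRow p).2 a : Fin m), j)))
      = fun a j => ∑ l, X (((mrRow p).1.orderIsoOfFin (mrRow p).2 a : Fin m), l) * algebraMap k (MvPolynomial (Fin m × Fin n') k) (φ l j) := by
      ext1 a; ext1 j
      exact aeval_X _ _
    rw [h2, mrCoef_spec, mrSg, aeval_X, map_sum]
    refine Finset.sum_congr rfl fun K _ => ?_
    rw [map_mul, mr_pres_X]
    congr 1
    exact (minorPresentation k t m n').commutes _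
  exact AlgHom.congr_fun this f

theorem mr_sg_mem {k : Type u} [CommRing k] (t m : ℕ) {n n' : ℕ}
    (φ : Matrix (Fin n') (Fin n) k) (f : MvPolynomial (MinorIndex t m n) k)
    (hf : f ∈ minorRelations k t m n) : mrSg t m φ f ∈ minorRelations k t m n' := by
  have hf' : minorPresentation k t m n f = 0 := hf
  change minorPresentation k t m n' (mrSg t m φ f) = 0
  rw [mr_pres_sg, hf', map_zero]

theorem mr_sg_hom {k : Type u} [CommRing k] (t m : ℕ) {n n' : ℕ}
    (φ : Matrix (Fin n') (Fin n) k) (f : MvPolynomial (MinorIndex t m n) k) (d : ℕ)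
    (hf : f.IsHomogeneous d) : (mrSg t m φ f).IsHomogeneous d := by
  have := hf.aeval (fun p : MinorIndex t m n => ∑ K, C (mrCoef φ (mrColOf p) K) * X (mrIdx (mrRow p) K))
    (n := 1) (fun p => IsHomogeneous.sum _ _ _ fun K _ => isHomogeneous_C_mul_X _ _)
  rwa [one_mul] at this

theorem mr_sg_deg {k : Type u} [CommRing k] (t m : ℕ) {n n' : ℕ}
    (φ : Matrix (Fin n') (Fin n) k) (f : MvPolynomial (MinorIndex t m n) k) :
    (mrSg t m φ f).totalDegree ≤ f.totalDegree := by
  conv_lhs => rw [← sum_homogeneousComponent f, map_sum]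
  refine totalDegree_finsetSum_le fun i hi => ?_
  have := (mr_sg_hom t m φ _ i (homogeneousComponent_isHomogeneous i f)).totalDegree_le
  have := Finset.mem_range.1 hi
  omega

theorem mr_det_hom {k : Type u} [CommRing k] {t n : ℕ} {σ : Type*}
    (v : Fin t → Fin n → σ) (K : MrCol t n) :
    (mrDet (fun a j => (X (v a j) : MvPolynomial σ k)) K).IsHomogeneous t := by
  rw [mrDet, Matrix.det_apply']
  refine IsHomogeneous.sum _ _ _ fun s _ => ?_
  have h1 : (∏ i, (Matrix.of fun a b : Fin t =>
      (X (v a (K.1.orderIsoOfFin K.2 b : Fin n)) : MvPolynomial σ k)) (s i) i).IsHomogeneous t := by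
    have := IsHomogeneous.prod Finset.univ (fun i : Fin t => (X (v (s i) (K.1.orderIsoOfFin K.2 i : Fin n)) : MvPolynomial σ k)) (fun _ => 1)
      (fun i _ => isHomogeneous_X _ _)
    simpa using this
  have h2 := h1.C_mul (((Equiv.Perm.sign s : ℤ)) : k)
  rwa [map_intCast] at h2

theorem mr_pres_hom {k : Type u} [CommRing k] (t m n : ℕ)
    (f : MvPolynomial (MinorIndex t m n) k) (d : ℕ)
    (hf : f.IsHomogeneous d) : (minorPresentation k t m n f).IsHomogeneous (t * d) :=
  hf.aeval _ fun p => mr_det_hom (fun a j => (((mrRow p).1.orderIsoOfFin (mrRow p).2 a : Fin m), j)) (mrColOf p)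

theorem mr_comp_mem {k : Type u} [CommRing k] (t m n : ℕ) (ht : 1 ≤ t)
    (f : MvPolynomial (MinorIndex t m n) k) (hf : f ∈ minorRelations k t m n) (d : ℕ) :
    homogeneousComponent d f ∈ minorRelations k t m n := by
  have hf' : minorPresentation k t m n f = 0 := hf
  change minorPresentation k t m n _ = 0
  by_cases hd : d ∈ Finset.range (f.totalDegree + 1)
  · rw [← sum_homogeneousComponent f, map_sum] at hf'
    have h := congrArg (homogeneousComponent (t * d)) hf'
    rw [map_sum, map_zero, Finset.sum_eq_single d] at h
    · rwa [homogeneousComponent_of_mem (mr_pres_hom t m n _ d (homogeneousComponent_isHomogeneous d f)),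
        if_pos rfl] at h
    · intro e _ he
      rw [homogeneousComponent_of_mem (mr_pres_hom t m n _ e (homogeneousComponent_isHomogeneous e f)),
        if_neg]
      intro h; exact he (Nat.eq_of_mul_eq_mul_left ht h).symm
    · intro h; exact absurd hd h
  · rw [homogeneousComponent_eq_zero, map_zero]
    simp at hd; omega

/-- inclusion of the first rows -/
noncomputable def mrIota (k : Type u) [CommRing k] (t m n : ℕ) :
    MvPolynomial (Fin m × Fin n) k →ₐ[k] MvPolynomial (Fin (m + t) × Fin n) k :=
  rename fun x => (Fin.castAdd t x.1, x.2)

/-- polarized map -/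
noncomputable def mrG (k : Type u) [CommRing k] (t m n : ℕ) (I : MrCol t m)
    (f : MvPolynomial (MinorIndex t m n) k) : MvPolynomial (Fin (m + t) × Fin n) k :=
  ∑ J : MrCol t n, mrDet (fun a j => X (Fin.natAdd m a, j)) J *
    mrIota k t m n (minorPresentation k t m n (pderiv (mrIdx I J) f))

theorem mrG_add {k : Type u} [CommRing k] {t m n : ℕ} (I : MrCol t m)
    (f g : MvPolynomial (MinorIndex t m n) k) :
    mrG k t m n I (f + g) = mrG k t m n I f + mrG k t m n I g := by
  simp [mrG, mul_add, Finset.sum_add_distrib]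

theorem mrG_C {k : Type u} [CommRing k] {t m n : ℕ} (I : MrCol t m) (r : k) :
    mrG k t m n I (C r) = 0 := by
  simp [mrG]

theorem mrG_mul {k : Type u} [CommRing k] {t m n : ℕ} (I : MrCol t m)
    (f g : MvPolynomial (MinorIndex t m n) k) :
    mrG k t m n I (f * g) = mrIota k t m n (minorPresentation k t m n f) * mrG k t m n I g
      + mrIota k t m n (minorPresentation k t m n g) * mrG k t m n I f := by
  simp only [mrG, Derivation.leibniz, smul_eq_mul, map_add, map_mul, Finset.mul_sum,
    ← Finset.sum_add_distrib]
  exact Finset.sum_congr rfl fun J _ => by ring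

theorem mrG_smul {k : Type u} [CommRing k] {t m n : ℕ} (I : MrCol t m) (r : k)
    (f : MvPolynomial (MinorIndex t m n) k) :
    mrG k t m n I (r • f) = r • mrG k t m n I f := by
  simp [mrG, Finset.smul_sum]

/-- linear version -/
noncomputable def mrGL (k : Type u) [CommRing k] (t m n : ℕ) (I : MrCol t m) :
    MvPolynomial (MinorIndex t m n) k →ₗ[k] MvPolynomial (Fin (m + t) × Fin n) k where
  toFun := mrG k t m n I
  map_add' := mrG_add I
  map_smul' := mrG_smul I

theorem mrGL_apply {k : Type u} [CommRing k] {t m n : ℕ} (I : MrCol t m)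
    (f : MvPolynomial (MinorIndex t m n) k) : mrGL k t m n I f = mrG k t m n I f := rfl

theorem mrG_X {k : Type u} [CommRing k] {t m n : ℕ} (I : MrCol t m) (p : MinorIndex t m n) :
    mrG k t m n I (X p) = if mrRow p = I then mrDet (fun a j => X (Fin.natAdd m a, j)) (mrColOf p)
      else 0 := by
  have hp : ∀ J, (mrIdx I J = p ↔ mrRow p = I ∧ J = mrColOf p) := by
    intro J
    constructor
    · rintro rfl; exact ⟨rfl, rfl⟩
    · rintro ⟨rfl, rfl⟩; rfl
  simp only [mrG, pderiv_X, Pi.single_apply]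
  have : ∀ J, (p = mrIdx I J ↔ mrRow p = I ∧ J = mrColOf p) := fun J => by rw [eq_comm, hp]
  by_cases h : mrRow p = I
  · rw [Finset.sum_eq_single (mrColOf p)]
    · simp [this, h]
    · intro J _ hJ; simp [this, hJ]
    · simp
  · simp [this, h]

theorem mr_tau_iota {k : Type u} [CommRing k] (t m : ℕ) {n n' : ℕ}
    (φ : Matrix (Fin n') (Fin n) k) (f : MvPolynomial (Fin m × Fin n) k) :
    mrTau (m + t) φ (mrIota k t m n f) = mrIota k t m n' (mrTau m φ f) := by
  have : (mrTau (m + t) φ).comp (mrIota k t m n) = (mrIota k t m n').comp (mrTau m φ) := by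
    apply MvPolynomial.algHom_ext
    intro x
    simp [mrTau, mrIota]
  exact AlgHom.congr_fun this f

theorem mrG_sg_X {k : Type u} [CommRing k] (t m : ℕ) {n n' : ℕ} (I : MrCol t m)
    (φ : Matrix (Fin n') (Fin n) k) (p : MinorIndex t m n) :
    mrG k t m n' I (mrSg t m φ (X p)) = mrTau (m + t) φ (mrG k t m n I (X p)) := by
  rw [mrG_X, mrSg, aeval_X]
  rw [← mrGL_apply, map_sum]
  have h1 : ∀ K, mrGL k t m n' I (C (mrCoef φ (mrColOf p) K) * X (mrIdx (mrRow p) K))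
      = if mrRow p = I then C (mrCoef φ (mrColOf p) K) * mrDet (fun a j => X (Fin.natAdd m a, j)) K
        else 0 := by
    intro K
    have hr : mrRow (mrIdx (mrRow p) K) = mrRow p := rfl
    have hcl : mrColOf (mrIdx (mrRow p) K) = K := rfl
    rw [← smul_eq_C_mul, map_smul, mrGL_apply, mrG_X, hr, hcl]
    split_ifs
    · rw [smul_eq_C_mul]
    · rw [smul_zero]
  simp only [h1]
  split_ifs
  · have h := mr_map_det (mrTau (m + t) φ).toRingHom (fun a j => X (Fin.natAdd m a, j)) (mrColOf p)
    refine Eq.trans ?_ h.symm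
    have h2 : (fun (a : Fin t) (j : Fin n) => (mrTau (m + t) φ).toRingHom (X (Fin.natAdd m a, j)))
      = fun a j => ∑ l, X (Fin.natAdd m a, l) * algebraMap k (MvPolynomial (Fin (m + t) × Fin n') k) (φ l j) := by
      ext1 a; ext1 j
      exact aeval_X _ _
    rw [h2, mrCoef_spec]
    rfl
  · simp

theorem mrG_sg {k : Type u} [CommRing k] (t m : ℕ) {n n' : ℕ} (I : MrCol t m)
    (φ : Matrix (Fin n') (Fin n) k) (f : MvPolynomial (MinorIndex t m n) k) :
    mrG k t m n' I (mrSg t m φ f) = mrTau (m + t) φ (mrG k t m n I f) := by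
  induction f using MvPolynomial.induction_on with
  | C r =>
    have : mrSg t m φ (C r) = C r := (mrSg t m φ).commutes r
    rw [this, mrG_C, mrG_C, map_zero]
  | add f g hf hg => rw [map_add, mrG_add, hf, hg, mrG_add, map_add]
  | mul_X f p hf =>
    have hX : mrG k t m n' I (mrSg t m φ (X p)) = mrTau (m + t) φ (mrG k t m n I (X p)) :=
      mrG_sg_X t m I φ p
    rw [map_mul, mrG_mul, mrG_mul, hf, hX, map_add, map_mul, map_mul, mr_pres_sg, mr_pres_sg,
      mr_tau_iota, mr_tau_iota]

theorem mrG_hom {k : Type u} [CommRing k] {t m n : ℕ} (I : MrCol t m)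
    (f : MvPolynomial (MinorIndex t m n) k) (d : ℕ) (hf : f.IsHomogeneous d) :
    (mrG k t m n I f).IsHomogeneous (t + t * (d - 1)) :=
  IsHomogeneous.sum _ _ _ fun J _ =>
    (mr_det_hom (fun a j => (Fin.natAdd m a, j)) J).mul
      (mr_pres_hom t m n _ _ hf.pderiv).rename_isHomogeneous

theorem mr_det_delta {B : Type*} [CommRing B] {t n : ℕ} (J0 J : MrCol t n) :
    mrDet (fun a j => if (J0.1.orderIsoOfFin J0.2 a : Fin n) = j then (1 : B) else 0) J
      = if J = J0 then 1 else 0 := by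
  split_ifs with h
  · subst h
    rw [mrDet, ← Matrix.det_one (n := Fin t)]
    congr 1
    ext a b
    simp [Matrix.one_apply]
  · have : ∃ x ∈ J0.1, x ∉ J.1 := by
      by_contra hc
      push Not at hc
      exact h (Subtype.ext (Finset.eq_of_subset_of_card_le hc (by rw [J.2, J0.2])).symm)
    obtain ⟨x, hx, hxJ⟩ := this
    refine Matrix.det_eq_zero_of_row_eq_zero ((J0.1.orderIsoOfFin J0.2).symm ⟨x, hx⟩) fun b => ?_
    rw [Matrix.of_apply]
    refine if_neg ?_
    intro he
    apply hxJ
    rw [OrderIso.apply_symm_apply] at he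
    change x = _ at he
    rw [he]
    exact (J.1.orderIsoOfFin J.2 b).2

theorem mrG_extract {k : Type u} [CommRing k] {t m n : ℕ} (I : MrCol t m) (J0 : MrCol t n)
    (f : MvPolynomial (MinorIndex t m n) k) (hf : mrG k t m n I f = 0) :
    minorPresentation k t m n (pderiv (mrIdx I J0) f) = 0 := by
  let ev : MvPolynomial (Fin (m + t) × Fin n) k →ₐ[k] MvPolynomial (Fin m × Fin n) k :=
    aeval fun x => Fin.addCases (fun i => X (i, x.2))
      (fun a => if (J0.1.orderIsoOfFin J0.2 a : Fin n) = x.2 then 1 else 0) x.1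
  have h1 : ∀ g, ev (mrIota k t m n g) = g := by
    intro g
    have : ev.comp (mrIota k t m n) = AlgHom.id k _ := by
      apply MvPolynomial.algHom_ext
      intro x
      simp [ev, mrIota]
    exact AlgHom.congr_fun this g
  have h2 : ∀ J : MrCol t n, ev (mrDet (fun a j => X (Fin.natAdd m a, j)) J)
      = if J = J0 then 1 else 0 := by
    intro J
    refine (mr_map_det ev.toRingHom _ _).trans ?_
    rw [← mr_det_delta]
    congr 1
    ext1 a; ext1 j
    refine (aeval_X _ _).trans ?_
    simp
  have h := congrArg ev hf
  simpa [mrG, h1, h2] using h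

/-- If the ideal of relations of the `t`-minors of a generic `m × (m+t)` matrix is
generated in degrees `≤ D`, then so is the ideal of relations of the `t`-minors of a
generic `m × n` matrix, for any `n ≥ m`. -/
theorem minorRelations_degree_bound_from_square (k : Type*) [Field k] [CharZero k]
    (t m n D : ℕ) (ht : 1 ≤ t) (htm : t ≤ m) (hmn : m ≤ n) (hD : 2 ≤ D)
    (h : GeneratedInDegreesLE (minorRelations k t m (m + t)) D) :
    GeneratedInDegreesLE (minorRelations k t m n) D := by
  classical
  set T := Ideal.span {x | x ∈ minorRelations k t m n ∧ x.totalDegree ≤ D} with hT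
  have hsg : ∀ (A : Matrix (Fin n) (Fin (m + t)) k) (g : MvPolynomial (MinorIndex t m (m + t)) k),
      g ∈ minorRelations k t m (m + t) → mrSg t m A g ∈ T := by
    intro A g hg
    rw [h] at hg
    have h1 : Ideal.span {x | x ∈ minorRelations k t m (m + t) ∧ x.totalDegree ≤ D}
        ≤ T.comap (mrSg t m A) := by
      rw [Ideal.span_le]
      rintro x ⟨hx, hxd⟩
      exact Ideal.subset_span ⟨mr_sg_mem t m A x hx, (mr_sg_deg t m A x).trans hxd⟩
    exact h1 hg
  have main : ∀ d (f : MvPolynomial (MinorIndex t m n) k), f.IsHomogeneous d →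
      f ∈ minorRelations k t m n → f ∈ T := by
    intro d
    induction d with
    | zero =>
      intro f hf hfJ
      exact Ideal.subset_span ⟨hfJ, hf.totalDegree_le.trans (Nat.zero_le _)⟩
    | succ d ih =>
      intro f hf hfJ
      obtain ⟨c, hc⟩ := mr_key k (m + t) n (t + t * (d + 1 - 1))
      set f' := ∑ φ ∈ c.support, (c φ : k) • mrSg t m (φ.1.map (Rat.castHom k))
          (mrSg t m (φ.2.map (Rat.castHom k)) f) with hf'
      have hf'T : f' ∈ T := by
        refine Ideal.sum_mem _ fun φ _ => ?_
        rw [smul_eq_C_mul]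
        exact Ideal.mul_mem_left _ _ (hsg _ _ (mr_sg_mem t m _ f hfJ))
      have hf'h : f'.IsHomogeneous (d + 1) := by
        refine IsHomogeneous.sum _ _ _ fun φ _ => ?_
        rw [smul_eq_C_mul]
        exact (mr_sg_hom t m _ _ _ (mr_sg_hom t m _ _ _ hf)).C_mul _
      have hG : ∀ I, mrG k t m n I (f - f') = 0 := by
        intro I
        have e1 : mrG k t m n I f' = mrG k t m n I f := by
          rw [← mrGL_apply, hf', map_sum]
          refine Eq.trans ?_ (hc _ (mrG_hom I f (d + 1) hf))
          refine Finset.sum_congr rfl fun φ _ => ?_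
          rw [map_smul, mrGL_apply, mrG_sg, mrG_sg]
        change mrGL k t m n I (f - f') = 0
        rw [map_sub]
        change mrG k t m n I f - mrG k t m n I f' = 0
        rw [e1, sub_self]
      have hh : (f - f').IsHomogeneous (d + 1) := hf.sub hf'h
      have hp : ∀ p, pderiv p (f - f') ∈ T := by
        intro p
        refine ih _ (by simpa using hh.pderiv (i := p)) ?_
        exact mrG_extract (mrRow p) (mrColOf p) _ (hG _)
      have heul := hh.sum_X_mul_pderiv
      have hmem : (d + 1) • (f - f') ∈ T := by
        rw [← heul]
        exact Ideal.sum_mem _ fun p _ => Ideal.mul_mem_left _ _ (hp p)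
      have hmem2 : f - f' ∈ T := by
        have h3 : f - f' = C (((d + 1 : ℕ) : k)⁻¹) * ((d + 1) • (f - f')) := by
          rw [nsmul_eq_mul, ← mul_assoc, ← map_natCast C (d + 1), ← C_mul, inv_mul_cancel₀, C_1, one_mul]
          exact_mod_cast Nat.succ_ne_zero d
        rw [h3]
        exact Ideal.mul_mem_left _ _ hmem
      have := Ideal.add_mem _ hmem2 hf'T
      rwa [sub_add_cancel] at this
  apply le_antisymm
  · intro f hf
    rw [← sum_homogeneousComponent f]
    exact Ideal.sum_mem _ fun d _ =>
      main d _ (homogeneousComponent_isHomogeneous d f) (mr_comp_mem t m n ht f hf d)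
  · rw [Ideal.span_le]
    exact fun x hx => hx.1
end

section
/- Let k be a field of characteristic 0 and 1 ≤ t ≤ m ≤ n. Then J_t(m,n) is generated in degrees ≤ m(m+t) − m − ⌊m²/t⌋ + 1; that is, every minimal generator of the ideal of relations among the t-minors of a generic m×n matrix has degree at most m(m+t) − m − ⌊m²/t⌋ + 1. -/
open MvPolynomial

noncomputable def permRep (k G Ω : Type*) [Field k] [Group G] [MulAction G Ω] :
    Representation k G (Ω → k) where
  toFun g := LinearMap.funLeft k k (fun w => g⁻¹ • w)
  map_one' := by ext f w; simp [LinearMap.funLeft]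
  map_mul' g h := by ext f w; simp [LinearMap.funLeft, mul_smul]

theorem permRep_apply {k G Ω : Type*} [Field k] [Group G] [MulAction G Ω] (g : G) (f : Ω → k)
    (w : Ω) : permRep k G Ω g f w = f (g⁻¹ • w) := rfl

theorem sum_comm_inv {k G Ω : Type*} [Field k] [CharZero k] [Group G] [Fintype G] [Fintype Ω]
    [DecidableEq Ω] [MulAction G Ω] (Z N : Ω → Ω → k)
    (hN : ∀ (g : G) u v, N (g • u) (g • v) = N u v)
    (h : ∀ w w' u v, ∑ g : G, (if g • w' = v then Z u (g • w) else 0) =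
      ∑ g : G, (if g • w = u then Z (g • w') v else 0)) (u v : Ω) :
    ∑ w, Z u w * N w v = ∑ w, N u w * Z w v := by
  have e1 : ∑ w, ∑ w', N w w' * ∑ g : G, (if g • w' = v then Z u (g • w) else 0) =
      Fintype.card G * ∑ w, Z u w * N w v := by
    have : ∀ g : G, ∑ w, ∑ w', N w w' * (if g • w' = v then Z u (g • w) else 0) =
        ∑ w, Z u w * N w v := by
      intro g
      conv_rhs => rw [← Equiv.sum_comp (MulAction.toPerm g)]
      refine Finset.sum_congr rfl fun w _ => ?_
      rw [Finset.sum_eq_single (g⁻¹ • v)]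
      · simp only [smul_inv_smul, if_true, MulAction.toPerm_apply]
        rw [mul_comm, ← hN g w, smul_inv_smul]
      · intro b _ hb
        rw [if_neg (fun hh => hb (by rw [← hh, inv_smul_smul])), mul_zero]
      · simp
    simp_rw [Finset.mul_sum] at this ⊢
    calc _ = ∑ g : G, ∑ w, ∑ w', N w w' * (if g • w' = v then Z u (g • w) else 0) := by
            rw [Finset.sum_congr rfl (fun w _ => Finset.sum_comm)]
            rw [Finset.sum_comm]
      _ = _ := by
        simp_rw [this]
        simp [Finset.mul_sum]
  have e2 : ∑ w, ∑ w', N w w' * ∑ g : G, (if g • w = u then Z (g • w') v else 0) =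
      Fintype.card G * ∑ w, N u w * Z w v := by
    have : ∀ g : G, ∑ w, ∑ w', N w w' * (if g • w = u then Z (g • w') v else 0) =
        ∑ w, N u w * Z w v := by
      intro g
      rw [Finset.sum_comm]
      conv_rhs => rw [← Equiv.sum_comp (MulAction.toPerm g)]
      refine Finset.sum_congr rfl fun w _ => ?_
      rw [Finset.sum_eq_single (g⁻¹ • u)]
      · simp only [smul_inv_smul, if_true, MulAction.toPerm_apply]
        rw [← hN g _ w, smul_inv_smul]
      · intro b _ hb
        rw [if_neg (fun hh => hb (by rw [← hh, inv_smul_smul])), mul_zero]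
      · simp
    simp_rw [Finset.mul_sum] at this ⊢
    calc _ = ∑ g : G, ∑ w, ∑ w', N w w' * (if g • w = u then Z (g • w') v else 0) := by
            rw [Finset.sum_congr rfl (fun w _ => Finset.sum_comm)]
            rw [Finset.sum_comm]
      _ = _ := by
        simp_rw [this]
        simp [Finset.mul_sum]
  have hc : (Fintype.card G : k) ≠ 0 := by
    simp [Fintype.card_ne_zero]
  apply mul_left_cancel₀ hc
  rw [← e1, ← e2]
  simp_rw [h]

theorem double_comm {k G Ω : Type*} [Field k] [CharZero k] [Group G] [Fintype G] [Fintype Ω]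
    [DecidableEq Ω] [MulAction G Ω] (Z : Ω → Ω → k)
    (h : ∀ w w' u v, ∑ g : G, (if g • w' = v then Z u (g • w) else 0) =
      ∑ g : G, (if g • w = u then Z (g • w') v else 0)) :
    ∃ a : G → k, ∀ u v, Z u v = ∑ g : G, if g • v = u then a g else 0 := by
  let ρ := permRep k G Ω
  let M := ρ.asModule
  have : NeZero (Nat.card G : k) := ⟨by simp [Nat.card_eq_fintype_card, Fintype.card_ne_zero]⟩
  have hsmul : ∀ (g : G) (x : Ω → k), (MonoidAlgebra.single g (1:k)) • (ρ.asModuleEquiv.symm x) =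
      ρ.asModuleEquiv.symm (ρ g x) := by
    intro g x
    rw [Representation.asModuleEquiv_symm_map_rho]; rfl
  let f : Module.End (Module.End (MonoidAlgebra k G) M) M :=
    { toFun := fun x => ρ.asModuleEquiv.symm (fun u => ∑ w, Z u w * ρ.asModuleEquiv x w)
      map_add' := by
        intro x y
        rw [← map_add]
        congr 1
        funext u
        simp [mul_add, Finset.sum_add_distrib]
      map_smul' := by
        intro T x
        let Tk : (Ω → k) →ₗ[k] (Ω → k) :=
          ρ.asModuleEquiv.toLinearMap ∘ₗ (T.restrictScalars k) ∘ₗ ρ.asModuleEquiv.symm.toLinearMap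
        have hT : ∀ y, ρ.asModuleEquiv (T y) = Tk (ρ.asModuleEquiv y) := by
          intro y; simp [Tk]
        let N : Ω → Ω → k := fun u v => Tk (Pi.single v 1) u
        have hTN : ∀ y u, Tk y u = ∑ w, N u w * y w := by
          intro y u
          conv_lhs => rw [pi_eq_sum_univ' y]
          simp only [map_sum, map_smul, Finset.sum_apply, Pi.smul_apply, smul_eq_mul, N]
          refine Finset.sum_congr rfl fun w _ => ?_
          rw [mul_comm]
        have hTρ : ∀ g y, Tk (ρ g y) = ρ g (Tk y) := by
          intro g y
          have := T.map_smul (MonoidAlgebra.single g (1:k)) (ρ.asModuleEquiv.symm y)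
          rw [hsmul] at this
          have h2 := hsmul g (Tk y)
          apply ρ.asModuleEquiv.symm.injective
          rw [← h2]
          simp only [Tk, LinearMap.comp_apply, LinearEquiv.coe_coe, LinearMap.restrictScalars_apply,
            LinearEquiv.symm_apply_apply]
          exact this
        have hN : ∀ (g : G) u v, N (g • u) (g • v) = N u v := by
          intro g u v
          have : (Pi.single (g • v) 1 : Ω → k) = ρ g (Pi.single v 1) := by
            funext w
            rw [permRep_apply]
            simp [Pi.single_apply, inv_smul_eq_iff]
          simp only [N]
          rw [this, hTρ, permRep_apply, inv_smul_smul]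
        have key := sum_comm_inv Z N hN h
        simp only [RingHom.id_apply, Module.End.smul_def]
        apply ρ.asModuleEquiv.injective
        rw [hT, hT]
        funext u
        rw [hTN]
        simp only [LinearEquiv.apply_symm_apply, hTN]
        simp_rw [Finset.mul_sum]
        rw [Finset.sum_comm]
        conv_rhs => rw [Finset.sum_comm]
        refine Finset.sum_congr rfl fun w _ => ?_
        have := key u w
        simp_rw [← mul_assoc]
        rw [← Finset.sum_mul, ← Finset.sum_mul, this] }
  classical
  obtain ⟨r, hr⟩ := jacobson_density f
    (Finset.univ.image fun v : Ω => ρ.asModuleEquiv.symm (Pi.single v 1))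
  refine ⟨fun g => r.coeff g, fun u v => ?_⟩
  have := hr (ρ.asModuleEquiv.symm (Pi.single v 1)) (Finset.mem_image_of_mem _ (Finset.mem_univ _))
  have h2 : ρ.asModuleEquiv (f (ρ.asModuleEquiv.symm (Pi.single v 1))) u =
      ρ.asAlgebraHom r (Pi.single v 1) u := by
    rw [this]
    exact congrFun (Representation.asModuleEquiv_map_smul ρ r _) u
  have h3 : ρ.asModuleEquiv (f (ρ.asModuleEquiv.symm (Pi.single v 1))) u = Z u v := by
    simp [f, Pi.single_apply]
  rw [← h3, h2, Representation.asAlgebraHom_def, MonoidAlgebra.lift_apply, Finsupp.sum_fintype]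
  · simp only [LinearMap.sum_apply, Finset.sum_apply, LinearMap.smul_apply, Pi.smul_apply]
    refine Finset.sum_congr rfl fun g _ => ?_
    rw [permRep_apply]
    by_cases hh : g • v = u
    · subst hh; simp
    · rw [if_neg hh, Pi.single_apply, if_neg (fun h' => hh (by rw [← h', smul_inv_smul])), smul_zero]
  · simp

def fib {ι L : Type*} [Fintype ι] [DecidableEq L] (w : ι → L) (a : L) : Finset ι :=
  Finset.univ.filter (fun i => w i = a)

theorem mem_fib {ι L : Type*} [Fintype ι] [DecidableEq L] {w : ι → L} {a : L} {i : ι} :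
    i ∈ fib w a ↔ w i = a := by simp [fib]

def W0 {ι L : Type*} [Fintype ι] [DecidableEq L] (t : ℕ) (w : ι → L) : Prop :=
  ∀ x, (fib w x).card = t

def Wt {ι L : Type*} [Fintype ι] [DecidableEq L] (t : ℕ) (w : ι → L) (a b : L) : Prop :=
  ∀ x, (fib w x).card + (if x = b then 1 else 0) = t + (if x = a then 1 else 0)

theorem Wt_self {ι L : Type*} [Fintype ι] [DecidableEq L] {t : ℕ} {w : ι → L} {a : L} :
    Wt t w a a ↔ W0 t w := by simp [Wt, W0]

theorem exists_perm_of_fib {ι L : Type*} [Fintype ι] [DecidableEq L] (u v : ι → L)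
    (h : ∀ x, (fib u x).card = (fib v x).card) : ∃ τ : Equiv.Perm ι, u ∘ τ = v := by
  have h' : ∀ x, Nonempty ({i // v i = x} ≃ {i // u i = x}) := by
    intro x
    rw [← Fintype.card_eq, Fintype.card_subtype, Fintype.card_subtype]
    exact (h x).symm
  let e' := fun x => (h' x).some
  refine ⟨(Equiv.sigmaFiberEquiv v).symm.trans
    ((Equiv.sigmaCongrRight e').trans (Equiv.sigmaFiberEquiv u)), ?_⟩
  funext i
  simp only [Function.comp_apply, Equiv.trans_apply]
  exact (e' (v i) ⟨i, rfl⟩).2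

theorem fib_comp {ι L : Type*} [Fintype ι] [DecidableEq L] (w : ι → L) (σ : Equiv.Perm ι)
    (a : L) : (fib (w ∘ σ) a).card = (fib w a).card := by
  refine Finset.card_bij (fun i _ => σ i) ?_ ?_ ?_
  · intro i hi; rw [mem_fib] at *; exact hi
  · intro i _ j _ h; exact σ.injective h
  · intro j hj; refine ⟨σ.symm j, ?_, by simp⟩
    rw [mem_fib] at *; simpa using hj

theorem Wt_comp {ι L : Type*} [Fintype ι] [DecidableEq L] {t : ℕ} {w : ι → L} {a b : L}
    (h : Wt t w a b) (σ : Equiv.Perm ι) : Wt t (w ∘ σ) a b := by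
  intro x; rw [fib_comp]; exact h x

theorem W0_comp {ι L : Type*} [Fintype ι] [DecidableEq L] {t : ℕ} {w : ι → L}
    (h : W0 t w) (σ : Equiv.Perm ι) : W0 t (w ∘ σ) := by
  intro x; rw [fib_comp]; exact h x

theorem fib_update_new {ι L : Type*} [Fintype ι] [DecidableEq ι] [DecidableEq L] (w : ι → L)
    (j : ι) (c : L) : fib (Function.update w j c) c = insert j (fib w c) := by
  ext i
  simp only [mem_fib, Finset.mem_insert, Function.update_apply]
  split_ifs with h <;> simp [h]

theorem fib_update_ne {ι L : Type*} [Fintype ι] [DecidableEq ι] [DecidableEq L] (w : ι → L)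
    (j : ι) (c x : L) (hx : x ≠ c) : fib (Function.update w j c) x = (fib w x).erase j := by
  ext i
  simp only [mem_fib, Finset.mem_erase, Function.update_apply]
  split_ifs with h <;> simp [h, hx.symm]

theorem Wt_update {ι L : Type*} [Fintype ι] [DecidableEq ι] [DecidableEq L] {t : ℕ} {w : ι → L}
    {a b c : L} (h : Wt t w a b) {j : ι} (hj : w j = a) (hac : a ≠ c) :
    Wt t (Function.update w j c) c b := by
  intro x
  have hx := h x
  by_cases hxc : x = c
  · subst hxc
    rw [fib_update_new, Finset.card_insert_of_notMem (by rw [mem_fib, hj]; exact hac)]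
    rw [if_neg (Ne.symm hac)] at hx
    simp; omega
  · rw [fib_update_ne _ _ _ _ hxc, if_neg hxc]
    by_cases hxa : x = a
    · subst hxa
      have hm : j ∈ fib w x := mem_fib.2 hj
      rw [Finset.card_erase_of_mem hm]
      have := Finset.card_pos.2 ⟨j, hm⟩
      simp at hx; omega
    · rw [Finset.erase_eq_of_notMem (by rw [mem_fib, hj]; exact Ne.symm hxa)]
      rw [if_neg hxa] at hx; exact hx

theorem update_comp_perm {ι L : Type*} [DecidableEq ι] (v : ι → L) (σ : Equiv.Perm ι) (j : ι)
    (a : L) : Function.update v (σ j) a ∘ σ = Function.update (v ∘ σ) j a := by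
  funext i
  simp only [Function.comp_apply, Function.update_apply, σ.injective.eq_iff]

theorem ind_update {ι L A : Type*} [Fintype ι] [DecidableEq ι] [DecidableEq L] [AddCommMonoid A]
    (v w : ι → L) (σ : Equiv.Perm ι) (a a' : L) (x : A) :
    ∑ j ∈ fib w a, (if v ∘ σ = Function.update w j a' then x else 0) =
    ∑ j ∈ fib v a', (if Function.update v j a ∘ σ = w then x else 0) := by
  simp only [fib, Finset.sum_filter]
  rw [← Equiv.sum_comp σ (fun j => if v j = a' then _ else _)]
  refine Finset.sum_congr rfl fun j _ => ?_
  rw [← ite_and, ← ite_and]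
  congr 1
  rw [update_comp_perm]
  apply propext
  constructor
  · rintro ⟨h1, h2⟩
    refine ⟨by simpa using congrFun h2 j, ?_⟩
    rw [h2]; simp [← h1]
  · rintro ⟨h1, h2⟩
    refine ⟨by rw [← h2]; simp, ?_⟩
    rw [← h2]
    funext i
    by_cases hi : i = j
    · subst hi; simp [h1]
    · simp [hi]

theorem core {ι L k : Type*} [Fintype ι] [DecidableEq ι] [DecidableEq L] [Field k] [CharZero k]
    (t : ℕ) (Z : (ι → L) → (ι → L) → k)
    (hZ : ∀ a a' b, a ≠ a' → ∀ v w, Wt t v a' b → Wt t w a b →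
      ∑ j ∈ fib w a, Z v (Function.update w j a') = ∑ j ∈ fib v a', Z (Function.update v j a) w) :
    ∀ (h : ℕ) (a b : L) (w w' : ι → L), W0 t w → Wt t w' a b →
      (Finset.univ.filter (fun i => w i ≠ w' i)).card ≤ h → ∀ u v, W0 t u → Wt t v a b →
      ∑ σ : Equiv.Perm ι, (if w' ∘ σ = v then Z u (w ∘ σ) else 0) =
      ∑ σ : Equiv.Perm ι, (if w ∘ σ = u then Z (w' ∘ σ) v else 0) := by
  intro h
  induction h with
  | zero =>
    intro a b w w' hw hw' hd u v hu hv
    have hww : w = w' := by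
      funext i
      by_contra hi
      have : i ∈ Finset.univ.filter (fun i => w i ≠ w' i) := by simp [hi]
      have := Finset.card_pos.2 ⟨i, this⟩
      omega
    subst hww
    have hv0 : W0 t v := by
      intro x
      have h1 := hw' x; have h2 := hv x; have h3 := hw x
      omega
    obtain ⟨τ, hτ⟩ := exists_perm_of_fib u v (fun x => by rw [hu x, hv0 x])
    have e1 : ∀ σ : Equiv.Perm ι, (if w ∘ σ = v then Z u (w ∘ σ) else 0) =
        if w ∘ σ = v then Z u v else 0 := by
      intro σ; split_ifs with hh
      · rw [hh]
      · rfl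
    have e2 : ∀ σ : Equiv.Perm ι, (if w ∘ σ = u then Z (w ∘ σ) v else 0) =
        if w ∘ σ = u then Z u v else 0 := by
      intro σ; split_ifs with hh
      · rw [hh]
      · rfl
    simp_rw [e1, e2]
    rw [← Equiv.sum_comp (Equiv.mulRight τ)]
    refine Finset.sum_congr rfl fun σ _ => ?_
    congr 1
    apply propext
    rw [← hτ, Equiv.coe_mulRight, Equiv.Perm.coe_mul, ← Function.comp_assoc]
    exact τ.surjective.injective_comp_right.eq_iff
  | succ h ih =>
    -- reduced claim: there is a good position
    have main : ∀ (a b : L) (w w' : ι → L), W0 t w → Wt t w' a b →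
        (Finset.univ.filter (fun i => w i ≠ w' i)).card ≤ h + 1 →
        (∃ i, w' i = a ∧ w i ≠ a) → ∀ u v, W0 t u → Wt t v a b →
      ∑ σ : Equiv.Perm ι, (if w' ∘ σ = v then Z u (w ∘ σ) else 0) =
      ∑ σ : Equiv.Perm ι, (if w ∘ σ = u then Z (w' ∘ σ) v else 0) := by
      rintro a b w w' hw hw' hd ⟨i, hi, hwi⟩ u v hu hv
      obtain ⟨a', ha'⟩ : ∃ a', w i = a' := ⟨_, rfl⟩
      have haa : a ≠ a' := by rw [← ha']; exact Ne.symm hwi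
      set w2 := Function.update w' i a' with hw2
      have hw2t : Wt t w2 a' b := Wt_update hw' hi haa
      have hw2u : Function.update w2 i a = w' := by
        rw [hw2, Function.update_idem, ← hi, Function.update_eq_self]
      have hd2 : (Finset.univ.filter (fun i => w i ≠ w2 i)).card ≤ h := by
        have : (Finset.univ.filter (fun i => w i ≠ w2 i)) ⊆
            (Finset.univ.filter (fun i => w i ≠ w' i)).erase i := by
          intro j
          simp only [Finset.mem_filter, Finset.mem_univ, true_and, Finset.mem_erase, hw2,
            Function.update_apply]
          split_ifs with hj
          · subst hj; intro h0; exact absurd ha' h0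
          · intro h0; exact ⟨hj, h0⟩
        have h1 := Finset.card_le_card this
        rw [Finset.card_erase_of_mem (by simp [hi, ha', haa.symm])] at h1
        omega
      let Lf : (ι → L) → k := fun x => ∑ σ : Equiv.Perm ι, (if x ∘ σ = v then Z u (w ∘ σ) else 0)
      let Rf : (ι → L) → k := fun x => ∑ σ : Equiv.Perm ι, (if w ∘ σ = u then Z (x ∘ σ) v else 0)
      have hsum : ∑ j ∈ fib w2 a', Lf (Function.update w2 j a) =
          ∑ j ∈ fib w2 a', Rf (Function.update w2 j a) := by
        have hI : ∀ j ∈ fib v a, _ := fun j hj => ih a' b w w2 hw hw2t hd2 u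
          (Function.update v j a') hu (Wt_update hv (mem_fib.1 hj) haa)
        have hI2 := Finset.sum_congr rfl hI
        rw [Finset.sum_comm] at hI2
        simp_rw [ind_update] at hI2
        rw [Finset.sum_comm] at hI2
        simp only [Lf, Rf]
        rw [hI2, Finset.sum_comm]
        conv_rhs => rw [Finset.sum_comm]
        refine Finset.sum_congr rfl fun σ _ => ?_
        split_ifs with hσ
        · rw [hZ a a' b haa _ _ (Wt_comp hw2t σ) hv]
          symm
          refine Finset.sum_bij (fun j _ => σ.symm j) ?_ ?_ ?_ ?_
          · intro j hj; rw [mem_fib] at *; simpa using hj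
          · intro j _ j' _ hh; exact σ.symm.injective hh
          · intro j hj; refine ⟨σ j, ?_, by simp⟩
            rw [mem_fib] at *; exact hj
          · intro j _
            rw [← update_comp_perm]; simp
        · simp
      have hterm : ∀ j ∈ fib w2 a', w j ≠ a' →
          Lf (Function.update w2 j a) = Rf (Function.update w2 j a) := by
        intro j hj hwj
        rw [mem_fib] at hj
        refine ih a b w _ hw (Wt_update hw2t hj haa.symm) ?_ u v hu hv
        refine le_trans (Finset.card_le_card ?_) hd2
        intro l
        simp only [Finset.mem_filter, Finset.mem_univ, true_and, Function.update_apply]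
        split_ifs with hl
        · intro _; subst hl; rw [hj]; exact hwj
        · exact id
      have hterm2 : ∀ j ∈ fib w2 a', w j = a' →
          Lf (Function.update w2 j a) = Lf w' ∧ Rf (Function.update w2 j a) = Rf w' := by
        intro j hj hwj
        rw [mem_fib] at hj
        have s1 : w ∘ Equiv.swap i j = w := by
          funext l
          simp only [Function.comp_apply, Equiv.swap_apply_def]
          split_ifs with h1 h2
          · rw [h1, hwj, ha']
          · rw [h2, hwj, ha']
          · rfl
        have s2 : Function.update w2 j a = w' ∘ Equiv.swap i j := by
          rw [← hw2u]
          funext l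
          have hwi2 : w2 i = a' := by simp [hw2]
          simp only [Function.comp_apply, Equiv.swap_apply_def, Function.update_apply]
          split_ifs with h1 h2 h3 h4 h5 <;> simp_all
        constructor
        · simp only [Lf]
          rw [← Equiv.sum_comp (Equiv.mulLeft (Equiv.swap i j))]
          refine Finset.sum_congr rfl fun σ _ => ?_
          rw [s2, Equiv.coe_mulLeft, Equiv.Perm.coe_mul, ← Function.comp_assoc,
            ← Function.comp_assoc, s1, Function.comp_assoc w']
          simp [← Equiv.Perm.coe_mul]
        · simp only [Rf]
          rw [← Equiv.sum_comp (Equiv.mulLeft (Equiv.swap i j))]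
          refine Finset.sum_congr rfl fun σ _ => ?_
          rw [s2, Equiv.coe_mulLeft, Equiv.Perm.coe_mul, ← Function.comp_assoc,
            ← Function.comp_assoc, s1, Function.comp_assoc w']
          simp [← Equiv.Perm.coe_mul]
      have hz : ∑ j ∈ (fib w2 a').filter (fun j => w j = a'), (Lf w' - Rf w') = 0 := by
        rw [Finset.sum_filter]
        rw [← sub_eq_zero, ← Finset.sum_sub_distrib] at hsum
        refine Eq.trans (Finset.sum_congr rfl fun j hj => ?_) hsum
        split_ifs with hj2
        · rw [(hterm2 j hj hj2).1, (hterm2 j hj hj2).2]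
        · rw [hterm j hj hj2, sub_self]
      rw [Finset.sum_const, nsmul_eq_mul] at hz
      have hne : (((fib w2 a').filter (fun j => w j = a')).card : k) ≠ 0 := by
        rw [Nat.cast_ne_zero]
        apply Finset.card_ne_zero_of_mem (a := i)
        simp [mem_fib, hw2, ha']
      exact sub_eq_zero.1 ((mul_eq_zero.1 hz).resolve_left hne)
    intro a b w w' hw hw' hd u v hu hv
    by_cases hww : w = w'
    · refine ih a b w w' hw hw' ?_ u v hu hv
      subst hww; simp
    by_cases hab : a = b
    · subst hab
      obtain ⟨i, hi⟩ := Function.ne_iff.1 hww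
      rw [Wt_self] at hw' hv
      exact main (w' i) (w' i) w w' hw (Wt_self.2 hw') hd ⟨i, rfl, hi⟩ u v hu (Wt_self.2 hv)
    · refine main a b w w' hw hw' hd ?_ u v hu hv
      by_contra hcon
      push Not at hcon
      have hsub : fib w' a ⊆ fib w a := by
        intro i hi; rw [mem_fib] at *; exact hcon i hi
      have h1 := Finset.card_le_card hsub
      have h2 := hw' a
      rw [hw a] at h1
      rw [if_neg hab, if_pos rfl] at h2
      omega

noncomputable def sg (k : Type*) [Field k] {α : Type*} [Fintype α] [DecidableEq α]
    (σ : Equiv.Perm α) : k := ((Equiv.Perm.sign σ : ℤ) : k)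

section sg
variable (k : Type*) [Field k] {α β : Type*} [Fintype α] [DecidableEq α] [Fintype β] [DecidableEq β]

theorem sg_mul (σ τ : Equiv.Perm α) : sg k (σ * τ) = sg k σ * sg k τ := by
  simp [sg]

theorem sg_one : sg k (1 : Equiv.Perm α) = 1 := by simp [sg]

theorem sg_mul_self (σ : Equiv.Perm α) : sg k σ * sg k σ = 1 := by
  unfold sg
  rw [← Int.cast_mul, ← Units.val_mul, Int.units_mul_self]; simp

theorem sg_inv (σ : Equiv.Perm α) : sg k σ⁻¹ = sg k σ := by
  simp [sg]

theorem sg_symm (σ : Equiv.Perm α) : sg k σ.symm = sg k σ := by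
  simp [sg]

theorem sg_ne (σ : Equiv.Perm α) : sg k σ ≠ 0 := fun h => by
  have := sg_mul_self k σ
  simp [h] at this

theorem sign_mul_eq_sg {R : Type*} [CommRing R] [Algebra k R] (σ : Equiv.Perm α) (x : R) :
    ((Equiv.Perm.sign σ : ℤ) : R) * x = sg k σ • x := by
  rw [Algebra.smul_def, sg, map_intCast]

end sg

def mkIdx {t m n : ℕ} (I : Finset (Fin m)) (J : Finset (Fin n)) (hI : I.card = t) (hJ : J.card = t) :
    MinorIndex t m n := ⟨(I, J), hI, hJ⟩

theorem mkIdx_congr {t m n : ℕ} {I I' : Finset (Fin m)} {J J' : Finset (Fin n)} (hI : I.card = t)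
    (hJ : J.card = t) (hI' : I'.card = t) (hJ' : J'.card = t) (h1 : I = I') (h2 : J = J') :
    mkIdx I J hI hJ = mkIdx I' J' hI' hJ' := by
  subst h1 h2; rfl

theorem minorPresentation_mkIdx (k : Type*) [Field k] {t m n : ℕ} (I : Finset (Fin m))
    (J : Finset (Fin n)) (hI : I.card = t) (hJ : J.card = t) :
    minorPresentation k t m n (X (mkIdx I J hI hJ)) = genericMinor k m n t I J hI hJ := by
  rw [minorPresentation, aeval_X]; rfl

noncomputable def yv (k : Type*) [Field k] (t m n : ℕ) (r : Fin t → Fin m) (c : Fin t → Fin n) :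
    MvPolynomial (MinorIndex t m n) k := by
  classical
  exact if h : Function.Injective r ∧ Function.Injective c then
    (sg k (Tuple.sort r) * sg k (Tuple.sort c)) •
      (X (mkIdx (Finset.univ.image r) (Finset.univ.image c)
        (by rw [Finset.card_image_of_injective _ h.1]; simp)
        (by rw [Finset.card_image_of_injective _ h.2]; simp)) : MvPolynomial (MinorIndex t m n) k)
  else 0

theorem sort_strictMono {t m : ℕ} {r : Fin t → Fin m} (h : Function.Injective r) :
    StrictMono (r ∘ Tuple.sort r) :=
  (Tuple.monotone_sort r).strictMono_of_injective (h.comp (Tuple.sort r).injective)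

theorem orderIso_image {t m : ℕ} {r : Fin t → Fin m} (h : Function.Injective r)
    (hc : (Finset.univ.image r).card = t) (a : Fin t) :
    ((Finset.univ.image r).orderIsoOfFin hc a : Fin m) = r (Tuple.sort r a) := by
  have := Finset.orderEmbOfFin_unique hc (f := r ∘ Tuple.sort r) (by intro x; simp)
    (sort_strictMono h)
  exact (congrFun this a).symm

theorem yv_pi (k : Type*) [Field k] (t m n : ℕ) (r : Fin t → Fin m) (c : Fin t → Fin n) :
    minorPresentation k t m n (yv k t m n r c) =
      Matrix.det (Matrix.of fun i j => (X (r i, c j) : MvPolynomial (Fin m × Fin n) k)) := by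
  unfold yv
  split_ifs with h
  · rw [map_smul, minorPresentation_mkIdx, genericMinor]
    simp only [orderIso_image h.1, orderIso_image h.2]
    let M : Matrix (Fin t) (Fin t) (MvPolynomial (Fin m × Fin n) k) :=
      Matrix.of fun i j => (X (r i, c j))
    have : (Matrix.of fun a b => (X (r (Tuple.sort r a), c (Tuple.sort c b)) :
        MvPolynomial (Fin m × Fin n) k)) =
        (M.submatrix (Tuple.sort r) id).submatrix id (Tuple.sort c) := by
      ext a b; rfl
    rw [this, Matrix.det_permute', Matrix.det_permute, sign_mul_eq_sg k, sign_mul_eq_sg k, smul_smul,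
      smul_smul]
    have h1 := sg_mul_self k (Tuple.sort r)
    have h2 := sg_mul_self k (Tuple.sort c)
    have : sg k (Tuple.sort r) * sg k (Tuple.sort c) * (sg k (Tuple.sort c)) * (sg k (Tuple.sort r)) = 1 := by
      linear_combination sg k (Tuple.sort c) * sg k (Tuple.sort c) * h1 + h2
    rw [this, one_smul]
  · rw [map_zero]
    rw [not_and_or] at h
    rcases h with h | h
    · simp only [Function.Injective] at h
      push Not at h
      obtain ⟨i, j, hij, hne⟩ := h
      rw [Matrix.det_zero_of_row_eq hne]
      funext b; simp [hij]
    · simp only [Function.Injective] at h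
      push Not at h
      obtain ⟨i, j, hij, hne⟩ := h
      rw [Matrix.det_zero_of_column_eq hne]
      intro b; simp [hij]

theorem sort_comp {t m : ℕ} {r : Fin t → Fin m} (h : Function.Injective r) (σ : Equiv.Perm (Fin t)) :
    Tuple.sort (r ∘ σ) = σ⁻¹ * Tuple.sort r := by
  have h1 := Tuple.comp_perm_comp_sort_eq_comp_sort (f := r) (σ := σ)
  ext1 a
  have := congrFun h1 a
  simp only [Function.comp_apply] at this
  rw [Equiv.Perm.mul_apply, Equiv.Perm.eq_inv_iff_eq]
  exact h this

theorem yv_alt (k : Type*) [Field k] (t m n : ℕ) (r : Fin t → Fin m) (c : Fin t → Fin n)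
    (σ τ : Equiv.Perm (Fin t)) :
    yv k t m n (r ∘ σ) (c ∘ τ) = (sg k σ * sg k τ) • yv k t m n r c := by
  by_cases h : Function.Injective r ∧ Function.Injective c
  · have h' : Function.Injective (r ∘ σ) ∧ Function.Injective (c ∘ τ) :=
      ⟨h.1.comp σ.injective, h.2.comp τ.injective⟩
    unfold yv
    rw [dif_pos h, dif_pos h', smul_smul]
    congr 1
    · rw [sort_comp h.1, sort_comp h.2, sg_mul, sg_mul, sg_inv, sg_inv]; ring
    · congr 1
      apply mkIdx_congr
      · ext x; simp only [Finset.mem_image, Finset.mem_univ, true_and, Function.comp_apply]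
        exact σ.surjective.exists (p := fun a => r a = x) |>.symm
      · ext x; simp only [Finset.mem_image, Finset.mem_univ, true_and, Function.comp_apply]
        exact τ.surjective.exists (p := fun a => c a = x) |>.symm
  · have h' : ¬ (Function.Injective (r ∘ σ) ∧ Function.Injective (c ∘ τ)) := by
      rwa [Function.Injective.of_comp_iff' , Function.Injective.of_comp_iff'] <;>
      exact Equiv.bijective _
    unfold yv
    rw [dif_neg h, dif_neg h', smul_zero]

theorem yv_hom (k : Type*) [Field k] (t m n : ℕ) (r : Fin t → Fin m) (c : Fin t → Fin n) :
    (yv k t m n r c).IsHomogeneous 1 := by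
  unfold yv
  split_ifs with h
  · exact (homogeneousSubmodule _ k 1).smul_mem _ (isHomogeneous_X k _)
  · exact isHomogeneous_zero _ _ _

theorem yv_zero (k : Type*) [Field k] (t m n : ℕ) (r : Fin t → Fin m) (c : Fin t → Fin n)
    (h0 : minorPresentation k t m n (yv k t m n r c) = 0) : yv k t m n r c = 0 := by
  by_cases h : Function.Injective r ∧ Function.Injective c
  · exfalso
    rw [yv_pi] at h0
    have := congrArg (fun p => aeval (R := k) (fun q : Fin m × Fin n =>
      if ∃ i, r i = q.1 ∧ c i = q.2 then (1:k) else 0) p) h0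
    simp only [map_zero] at this
    rw [AlgHom.map_det] at this
    have e : (AlgHom.mapMatrix (aeval (R := k) (fun q : Fin m × Fin n =>
      if ∃ i, r i = q.1 ∧ c i = q.2 then (1:k) else 0)))
        (Matrix.of fun i j => (X (r i, c j) : MvPolynomial (Fin m × Fin n) k)) = 1 := by
      ext i j
      simp only [AlgHom.mapMatrix_apply, Matrix.map_apply, Matrix.of_apply, aeval_X, Matrix.one_apply,
        h.1.eq_iff, h.2.eq_iff]
      congr 1
      simp
    rw [e] at this
    simp at this
  · unfold yv; rw [dif_neg h]

theorem yv_X (k : Type*) [Field k] (t m n : ℕ) (p : MinorIndex t m n) :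
    ∃ r c, yv k t m n r c = X p := by
  obtain ⟨⟨I, J⟩, hI, hJ⟩ := p
  refine ⟨I.orderEmbOfFin hI, J.orderEmbOfFin hJ, ?_⟩
  unfold yv
  rw [dif_pos ⟨(I.orderEmbOfFin hI).injective, (J.orderEmbOfFin hJ).injective⟩]
  rw [Tuple.sort_eq_refl_iff_monotone.2 (I.orderEmbOfFin hI).monotone,
    Tuple.sort_eq_refl_iff_monotone.2 (J.orderEmbOfFin hJ).monotone]
  have h1 : ∀ s, sg k (Equiv.refl (Fin s)) = 1 := fun s => sg_one k
  rw [h1, mul_one, one_smul]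
  refine congrArg X (mkIdx_congr _ _ hI hJ ?_ ?_)
  · apply Finset.coe_injective; simp
  · apply Finset.coe_injective; simp

structure IsY {k τ P Q : Type*} [Field k] {t : ℕ} (π : MvPolynomial τ k →ₐ[k] MvPolynomial (P × Q) k)
    (y : (Fin t → P) → (Fin t → Q) → MvPolynomial τ k) : Prop where
  pi : ∀ r c, π (y r c) = Matrix.det (Matrix.of fun i j => (X (r i, c j) : MvPolynomial (P × Q) k))
  alt : ∀ r c (σ σ' : Equiv.Perm (Fin t)), y (r ∘ σ) (c ∘ σ') = (sg k σ * sg k σ') • y r c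
  hom : ∀ r c, (y r c).IsHomogeneous 1
  zero : ∀ r c, π (y r c) = 0 → y r c = 0
  gen : ∀ p, ∃ r c, y r c = X p

theorem eq_prodCongrLeft {t D : ℕ} (η : Equiv.Perm (Fin t × Fin D)) (h : ∀ p, (η p).2 = p.2) :
    ∃ σ : Fin D → Equiv.Perm (Fin t), η = Equiv.prodCongrLeft σ := by
  have hb : ∀ a, Function.Bijective (fun j => (η (j, a)).1) := by
    intro a
    rw [← Finite.injective_iff_bijective]
    intro i j hij
    have : η (i, a) = η (j, a) := Prod.ext hij (by rw [h, h])
    simpa using η.injective this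
  refine ⟨fun a => Equiv.ofBijective _ (hb a), ?_⟩
  ext1 ⟨j, a⟩
  exact Prod.ext rfl (h _)

theorem monomial_eq_prod {k τ : Type*} [Field k] : ∀ (D : ℕ) (d : τ →₀ ℕ), d.degree = D →
    ∃ f : Fin D → τ, monomial d (1 : k) = ∏ a, X (f a) := by
  intro D
  induction D with
  | zero =>
    intro d hd
    rw [Finsupp.degree_eq_zero_iff] at hd
    subst hd
    exact ⟨Fin.elim0, by simp⟩
  | succ D ih =>
    intro d hd
    have hne : d ≠ 0 := by rintro rfl; simp at hd
    obtain ⟨i, hi⟩ := Finsupp.ne_iff.1 hne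
    have hle : Finsupp.single i 1 ≤ d := by
      rw [Finsupp.single_le_iff]; exact Nat.one_le_iff_ne_zero.2 hi
    obtain ⟨e, rfl⟩ := exists_add_of_le hle
    have : e.degree = D := by
      rw [map_add, Finsupp.degree_single] at hd; omega
    obtain ⟨f, hf⟩ := ih e this
    refine ⟨Fin.cons i f, ?_⟩
    rw [Fin.prod_univ_succ]
    simp only [Fin.cons_zero, Fin.cons_succ]
    rw [← hf, X, monomial_mul, one_mul]

noncomputable def YY {k τ P Q : Type*} [Field k] {t : ℕ} (y : (Fin t → P) → (Fin t → Q) → MvPolynomial τ k)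
    (D : ℕ) (r : Fin t × Fin D → P) (c : Fin t × Fin D → Q) : MvPolynomial τ k :=
  ∏ a : Fin D, y (fun j => r (j, a)) (fun j => c (j, a))

noncomputable def Dm (k : Type*) {ι L P Q : Type*} [Field k] [Fintype ι] [DecidableEq ι] [DecidableEq L]
    (r : ι → P) (c : ι → Q) (w w' : ι → L) : MvPolynomial (P × Q) k :=
  Matrix.det (Matrix.of fun i j => if w i = w' j then X (r i, c j) else 0)

section Dm
variable {k : Type*} {ι L P Q : Type*} [Field k] [Fintype ι] [DecidableEq ι] [DecidableEq L]
    (r : ι → P) (c : ι → Q)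

theorem Dm_eq (w w' : ι → L) : Dm k r c w w' =
    ∑ σ : Equiv.Perm ι, if w ∘ σ = w' then sg k σ • ∏ i, X (r (σ i), c i) else 0 := by
  rw [Dm, Matrix.det_apply']
  refine Finset.sum_congr rfl fun σ _ => ?_
  simp only [Matrix.of_apply]
  rw [Finset.prod_ite_zero, sign_mul_eq_sg k]
  have : (∀ i ∈ Finset.univ, w (σ i) = w' i) ↔ w ∘ σ = w' := by
    simp [funext_iff]
  simp only [this]
  split_ifs <;> simp

theorem Dm_intertwine (v w : ι → L) (a a' : L) :
    ∑ j ∈ fib w a, Dm k r c v (Function.update w j a') =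
    ∑ j ∈ fib v a', Dm k r c (Function.update v j a) w := by
  simp only [Dm_eq]
  rw [Finset.sum_comm, Finset.sum_comm (s := fib v a')]
  refine Finset.sum_congr rfl fun σ _ => ?_
  exact ind_update v w σ a a' _

theorem Dm_perm (w w' : ι → L) (β β' : Equiv.Perm ι) :
    Dm k (r ∘ β) (c ∘ β') (w ∘ β) (w' ∘ β') = (sg k β * sg k β') • Dm k r c w w' := by
  let M : Matrix ι ι (MvPolynomial (P × Q) k) :=
    Matrix.of fun i j => if w i = w' j then X (r i, c j) else 0
  have : Dm k (r ∘ β) (c ∘ β') (w ∘ β) (w' ∘ β') =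
      ((M.submatrix β id).submatrix id β').det := rfl
  rw [this, Matrix.det_permute', Matrix.det_permute, sign_mul_eq_sg k, sign_mul_eq_sg k, smul_smul,
    mul_comm]
  rfl
end Dm

section Y
variable {k τ P Q : Type*} [Field k] {t : ℕ} {π : MvPolynomial τ k →ₐ[k] MvPolynomial (P × Q) k}
  {y : (Fin t → P) → (Fin t → Q) → MvPolynomial τ k} {D : ℕ}

theorem YY_fix (hy : IsY π y) (r : Fin t × Fin D → P) (c : Fin t × Fin D → Q) (η η' : Equiv.Perm (Fin t × Fin D))
    (h : ∀ p, (η p).2 = p.2) (h' : ∀ p, (η' p).2 = p.2) :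
    YY y D (r ∘ η) (c ∘ η') = (sg k η * sg k η') • YY y D r c := by
  obtain ⟨σ, rfl⟩ := eq_prodCongrLeft η h
  obtain ⟨σ', rfl⟩ := eq_prodCongrLeft η' h'
  have e : ∀ σ : Fin D → Equiv.Perm (Fin t), sg k (Equiv.prodCongrLeft σ) = ∏ a, sg k (σ a) := by
    intro σ
    simp [sg, Equiv.Perm.sign_prodCongrLeft]
  rw [e, e, ← Finset.prod_mul_distrib]
  unfold YY
  rw [← Finset.prod_smul]
  refine Finset.prod_congr rfl fun a _ => ?_
  exact hy.alt (fun j => r (j, a)) (fun j => c (j, a)) (σ a) (σ' a)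

theorem YY_pi (hy : IsY π y) (r : Fin t × Fin D → P) (c : Fin t × Fin D → Q) :
    π (YY y D r c) = Dm k r c Prod.snd Prod.snd := by
  unfold YY
  rw [map_prod]
  simp only [hy.pi]
  rw [← Matrix.det_blockDiagonal, Dm]
  congr 1
  ext1 ⟨i, a⟩ ⟨j, b⟩
  simp only [Matrix.blockDiagonal_apply, Matrix.of_apply]
  by_cases h : a = b
  · subst h; rfl
  · simp [h]

theorem YY_hom (hy : IsY π y) (r : Fin t × Fin D → P) (c : Fin t × Fin D → Q) : (YY y D r c).IsHomogeneous D := by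
  have := IsHomogeneous.prod (Finset.univ : Finset (Fin D))
    (fun a => y (fun j => r (j, a)) (fun j => c (j, a))) (fun _ => 1) (fun a _ => hy.hom _ _)
  unfold YY
  simpa using this

theorem YY_span (hy : IsY π y) (p : MvPolynomial τ k) (hp : p.IsHomogeneous D) :
    p ∈ Submodule.span k (Set.range fun rc : (Fin t × Fin D → P) × (Fin t × Fin D → Q) =>
      YY y D rc.1 rc.2) := by
  rw [p.as_sum]
  refine Submodule.sum_mem _ fun d hd => ?_
  have hd' : d.degree = D := by
    rw [Finsupp.degree_eq_weight_one]; exact hp (mem_support_iff.1 hd)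
  obtain ⟨f, hf⟩ := monomial_eq_prod (k := k) D d hd'
  have : monomial d (coeff d p) = coeff d p • monomial d (1 : k) := by
    rw [smul_monomial]; simp
  rw [this, hf]
  refine Submodule.smul_mem _ _ (Submodule.subset_span ?_)
  choose r c hrc using fun a => hy.gen (f a)
  refine ⟨(fun p => r p.2 p.1, fun p => c p.2 p.1), ?_⟩
  exact Finset.prod_congr rfl fun a _ => hrc a

theorem exists_en [NeZero D] : ∃ (e : Finset (Fin t × Fin D) → Fin t → Fin t × Fin D)
    (bp : (Fin t × Fin D → Fin D) → Equiv.Perm (Fin t × Fin D)),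
    ∀ w, W0 t w → ∀ j a, bp w (j, a) = e (fib w a) j ∧ w (bp w (j, a)) = a := by
  let e : Finset (Fin t × Fin D) → Fin t → Fin t × Fin D := fun A j =>
    if h : A.card = t then ((A.equivFinOfCardEq h).symm j : Fin t × Fin D) else (j, 0)
  have he : ∀ A, A.card = t → ∀ j, e A j ∈ A := by
    intro A h j
    simp only [e, dif_pos h]
    exact Subtype.prop _
  have he2 : ∀ A, A.card = t → Function.Injective (e A) := by
    intro A h i j hij
    simp only [e, dif_pos h] at hij
    simpa using Subtype.ext hij
  have hb : ∀ w, W0 t w → Function.Bijective (fun p : Fin t × Fin D => e (fib w p.2) p.1) := by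
    intro w hw
    rw [← Finite.injective_iff_bijective]
    rintro ⟨i, a⟩ ⟨j, b⟩ hij
    simp only at hij
    have h1 := mem_fib.1 (he _ (hw a) i)
    have h2 := mem_fib.1 (he _ (hw b) j)
    rw [hij, h2] at h1
    subst h1
    rw [he2 _ (hw b) hij]
  classical
  refine ⟨e, fun w => if h : W0 t w then Equiv.ofBijective _ (hb w h) else 1, ?_⟩
  intro w hw j a
  simp only [dif_pos hw, Equiv.ofBijective_apply, true_and]
  exact mem_fib.1 (he _ (hw a) j)

noncomputable def en [NeZero D] : Finset (Fin t × Fin D) → Fin t → Fin t × Fin D :=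
  (exists_en (t := t) (D := D)).choose

noncomputable def bp [NeZero D] : (Fin t × Fin D → Fin D) → Equiv.Perm (Fin t × Fin D) :=
  (exists_en (t := t) (D := D)).choose_spec.choose

theorem bp_en [NeZero D] {w : Fin t × Fin D → Fin D} (hw : W0 t w) (j a) :
    bp w (j, a) = en (fib w a) j :=
  ((exists_en (t := t) (D := D)).choose_spec.choose_spec w hw j a).1

theorem bp_w [NeZero D] {w : Fin t × Fin D → Fin D} (hw : W0 t w) : w ∘ bp w = Prod.snd := by
  funext ⟨j, a⟩
  exact ((exists_en (t := t) (D := D)).choose_spec.choose_spec w hw j a).2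

noncomputable def yt [NeZero D] (y : (Fin t → P) → (Fin t → Q) → MvPolynomial τ k)
    (r : Fin t × Fin D → P) (c : Fin t × Fin D → Q) (w w' : Fin t × Fin D → Fin D) :
    MvPolynomial τ k :=
  (sg k (bp w) * sg k (bp w')) • YY y D (r ∘ bp w) (c ∘ bp w')

theorem yt_pi (hy : IsY π y) [NeZero D] (r : Fin t × Fin D → P) (c : Fin t × Fin D → Q)
    {w w' : Fin t × Fin D → Fin D} (hw : W0 t w) (hw' : W0 t w') :
    π (yt y r c w w') = Dm k r c w w' := by
  unfold yt
  rw [map_smul, YY_pi hy]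
  have := Dm_perm (k := k) r c w w' (bp w) (bp w')
  rw [bp_w hw, bp_w hw'] at this
  rw [this, smul_smul]
  have : sg k (bp w) * sg k (bp w') * (sg k (bp w) * sg k (bp w')) = 1 := by
    linear_combination sg k (bp w') * sg k (bp w') * sg_mul_self k (bp w) + sg_mul_self k (bp w')
  rw [this, one_smul]

theorem W0_snd : W0 (L := Fin D) t (Prod.snd : Fin t × Fin D → Fin D) := by
  intro x
  have : fib (Prod.snd : Fin t × Fin D → Fin D) x = Finset.univ.map
      ⟨fun j : Fin t => (j, x), fun i j h => by simpa using h⟩ := by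
    ext ⟨j, a⟩
    rw [mem_fib]
    simp only [Finset.mem_map, Finset.mem_univ, true_and]
    constructor
    · rintro rfl; exact ⟨j, rfl⟩
    · rintro ⟨_, h⟩; exact (congrArg Prod.snd h).symm
  rw [this]; simp

theorem yt_equiv (hy : IsY π y) [NeZero D] (r : Fin t × Fin D → P) (c : Fin t × Fin D → Q)
    (g h : Equiv.Perm (Fin t × Fin D)) :
    yt y (r ∘ g) (c ∘ h) (Prod.snd ∘ g) (Prod.snd ∘ h) = (sg k g * sg k h) • YY y D r c := by
  unfold yt
  have key : ∀ g : Equiv.Perm (Fin t × Fin D), ∀ p, ((g * bp (Prod.snd ∘ g)) p).2 = p.2 := by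
    intro g p
    exact congrFun (bp_w (W0_comp W0_snd g)) p
  have := YY_fix hy r c _ _ (key g) (key h)
  rw [Function.comp_assoc, Function.comp_assoc, ← Equiv.Perm.coe_mul, ← Equiv.Perm.coe_mul, this,
    smul_smul]
  congr 1
  rw [sg_mul, sg_mul]
  linear_combination sg k g * sg k h * (sg k (bp (Prod.snd ∘ g)) * sg k (bp (Prod.snd ∘ g)) *
    sg_mul_self k (bp (Prod.snd ∘ h)) + sg_mul_self k (bp (Prod.snd ∘ g)))

noncomputable def KK [NeZero D] (y : (Fin t → P) → (Fin t → Q) → MvPolynomial τ k)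
    (r : Fin t × Fin D → P) (c : Fin t × Fin D → Q) (i : Fin D) (A B : Finset (Fin t × Fin D)) :
    Submodule k (MvPolynomial τ k) :=
  Submodule.span k {f | ∃ u u', W0 t u ∧ W0 t u' ∧ fib u i = A ∧ fib u' i = B ∧ f = yt y r c u u'}

theorem KK_factor (hy : IsY π y) [NeZero D] (r : Fin t × Fin D → P) (c : Fin t × Fin D → Q) (i : Fin D)
    (A B : Finset (Fin t × Fin D)) (f : MvPolynomial τ k) (hf : f ∈ KK y r c i A B) :
    ∃ g : MvPolynomial τ k, g.IsHomogeneous (D - 1) ∧ f = y (r ∘ en A) (c ∘ en B) * g := by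
  unfold KK at hf
  induction hf using Submodule.span_induction with
  | mem f hf =>
    obtain ⟨u, u', hu, hu', rfl, rfl, rfl⟩ := hf
    refine ⟨(sg k (bp u) * sg k (bp u')) • ∏ a ∈ Finset.univ.erase i,
      y (fun j => (r ∘ bp u) (j, a)) (fun j => (c ∘ bp u') (j, a)), ?_, ?_⟩
    · refine (homogeneousSubmodule _ k _).smul_mem _ ?_
      have := IsHomogeneous.prod (Finset.univ.erase i : Finset (Fin D))
        (fun a => y (fun j => (r ∘ bp u) (j, a)) (fun j => (c ∘ bp u') (j, a))) (fun _ => 1)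
        (fun a _ => hy.hom _ _)
      simpa using this
    · unfold yt YY
      rw [mul_smul_comm, ← Finset.mul_prod_erase _ _ (Finset.mem_univ i)]
      congr 2
      congr 1
      · funext j; simp [bp_en hu]
      · funext j; simp [bp_en hu']
  | zero => exact ⟨0, isHomogeneous_zero _ _ _, by simp⟩
  | add f g _ _ hf hg =>
    obtain ⟨f', hf1, rfl⟩ := hf
    obtain ⟨g', hg1, rfl⟩ := hg
    exact ⟨f' + g', hf1.add hg1, by ring⟩
  | smul s f _ hf =>
    obtain ⟨f', hf1, rfl⟩ := hf
    exact ⟨s • f', (homogeneousSubmodule _ k _).smul_mem _ hf1, by rw [mul_smul_comm]⟩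

theorem KK_psi (hy : IsY π y) [NeZero D] (r : Fin t × Fin D → P) (c : Fin t × Fin D → Q) (i : Fin D)
    (A B : Finset (Fin t × Fin D)) (ψ : MvPolynomial τ k →ₗ[k] k)
    (hψ : ∀ q g : MvPolynomial τ k, g.IsHomogeneous (D - 1) → π g = 0 → ψ (q * g) = 0)
    (f f' : MvPolynomial τ k) (hf : f ∈ KK y r c i A B) (hf' : f' ∈ KK y r c i A B)
    (h : π f = π f') : ψ f = ψ f' := by
  obtain ⟨g, hg, h1⟩ := KK_factor hy r c i A B _ ((KK y r c i A B).sub_mem hf hf')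
  rw [← sub_eq_zero, ← map_sub, h1]
  have h2 : π (y (r ∘ en A) (c ∘ en B)) * π g = 0 := by
    rw [← map_mul, ← h1, map_sub, h, sub_self]
  rcases mul_eq_zero.1 h2 with h2 | h2
  · rw [hy.zero _ _ h2, zero_mul, map_zero]
  · exact hψ _ _ hg h2

end Y

noncomputable def cc (k : Type*) [Field k] (t : ℕ) : ℕ → k
  | 0 => 1 / ((t : k) + 1)
  | (e + 1) => - ((e : k) + 1) * cc k t e / ((t : k) - e)

theorem exists_L {ι L k : Type*} [Fintype ι] [DecidableEq ι] [DecidableEq L] [Field k] [CharZero k]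
    (t : ℕ) (a b : L) (hab : a ≠ b) (w : ι → L) (hw : Wt t w a b) :
    ∃ Lc : (ι → L) → k, (∀ u, Lc u ≠ 0 → W0 t u ∧ ∀ i, i ≠ a → i ≠ b → fib u i = fib w i) ∧
      ∀ x, ∑ j ∈ fib x a, Lc (Function.update x j b) = if x = w then 1 else 0 := by
  classical
  let Gd : (ι → L) → Prop := fun u => ∀ i, u i = w i ∨ ((w i = a ∨ w i = b) ∧ (u i = a ∨ u i = b))
  let Lc : (ι → L) → k := fun u => if W0 t u ∧ Gd u then
    cc k t (Finset.univ.filter (fun i => w i = b ∧ u i = a)).card else 0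
  have hcard : ∀ {x : ι → L}, Wt t x a b → (fib x a).card = t + 1 := by
    intro x hx
    have := hx a
    rwa [if_neg hab, if_pos rfl] at this
  refine ⟨Lc, ?_, ?_⟩
  · intro u hu
    have h : W0 t u ∧ Gd u := by
      by_contra h
      exact hu (if_neg h)
    refine ⟨h.1, fun l hla hlb => ?_⟩
    ext i
    rw [mem_fib, mem_fib]
    rcases h.2 i with h3 | ⟨h3, h4⟩
    · rw [h3]
    · constructor
      · rintro rfl; rcases h4 with h4 | h4 <;> contradiction
      · rintro rfl; rcases h3 with h4 | h4 <;> contradiction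
  · intro x
    by_cases hgx : Gd x ∧ Wt t x a b
    · obtain ⟨hg, hx⟩ := hgx
      set E := Finset.univ.filter (fun i => w i = b ∧ x i = a) with hE
      have hterm : ∀ j ∈ fib x a, Lc (Function.update x j b) =
          if w j = b then cc k t (E.card - 1) else cc k t E.card := by
        intro j hj
        rw [mem_fib] at hj
        have h1 : W0 t (Function.update x j b) := Wt_self.1 (Wt_update hx hj hab)
        have h2 : Gd (Function.update x j b) := by
          intro i
          by_cases hi : i = j
          · subst hi
            right
            refine ⟨?_, by simp⟩
            rcases hg i with h | h
            · left; rw [← h, hj]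
            · exact h.1
          · simpa [hi] using hg i
        have h3 : Finset.univ.filter (fun i => w i = b ∧ (Function.update x j b) i = a) =
            E.erase j := by
          ext i
          simp only [hE, Finset.mem_filter, Finset.mem_univ, true_and, Finset.mem_erase]
          by_cases hi : i = j
          · subst hi; simp [hab.symm]
          · simp [hi]
        simp only [Lc]
        rw [if_pos ⟨h1, h2⟩, h3]
        split_ifs with hb
        · rw [Finset.card_erase_of_mem (by simp [hE, hb, hj])]
        · rw [Finset.erase_eq_of_notMem (by simp [hE, hb])]
      rw [Finset.sum_congr rfl hterm, Finset.sum_ite, Finset.sum_const, Finset.sum_const]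
      have hc1 : (fib x a).filter (fun j => w j = b) = E := by
        ext i; simp [hE, mem_fib, and_comm]
      have hc2 : E.card + ((fib x a).filter (fun j => ¬ w j = b)).card = t + 1 := by
        rw [← hc1, Finset.card_filter_add_card_filter_not, hcard hx]
      rw [hc1]
      have hE2 : E.card + 1 ≤ t := by
        have h1 : E ⊆ fib w b := by
          intro i; simp only [hE, mem_fib, Finset.mem_filter]; exact fun h => h.2.1
        have h2 := Finset.card_le_card h1
        have h3 := hw b
        rw [if_pos rfl, if_neg hab.symm] at h3
        omega
      have hc3 : (((fib x a).filter (fun j => ¬ w j = b)).card : k) = t + 1 - E.card := by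
        have := congrArg (Nat.cast (R := k)) hc2
        push_cast at this
        linear_combination this
      rw [nsmul_eq_mul, nsmul_eq_mul, hc3]
      by_cases hxw : x = w
      · have : E.card = 0 := by
          rw [Finset.card_eq_zero, hE]
          ext i; simp only [Finset.mem_filter, Finset.mem_univ, true_and, Finset.notMem_empty,
            iff_false]
          rintro ⟨h1, h2⟩
          rw [hxw, h1] at h2; exact hab h2.symm
        rw [if_pos hxw, this]
        have : (t : k) + 1 ≠ 0 := by exact_mod_cast Nat.succ_ne_zero t
        simp [cc]
        field_simp
      · rw [if_neg hxw]
        have hpos : E.card ≠ 0 := by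
          intro h0
          apply hxw
          rw [Finset.card_eq_zero] at h0
          have hEi : ∀ i, ¬ (w i = b ∧ x i = a) := by
            intro i hi
            have : i ∈ E := by simp [hE, hi]
            rw [h0] at this; simp at this
          have hsub : fib x a ⊆ fib w a := by
            intro i hi
            rw [mem_fib] at *
            rcases hg i with h | h
            · rw [← h, hi]
            · exact h.1.resolve_right (fun hb => hEi i ⟨hb, hi⟩)
          have heq := Finset.eq_of_subset_of_card_le hsub (by rw [hcard hx, hcard hw])
          funext i
          rcases hg i with h | ⟨h1, h2⟩
          · exact h
          · have h3 : x i = a ↔ w i = a := by rw [← mem_fib, ← mem_fib, heq]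
            rcases h1 with h1 | h1
            · rw [h1, h3]; exact h1
            · rcases h2 with h2 | h2
              · rw [h2, h3.1 h2]
              · rw [h1, h2]
        obtain ⟨e, he⟩ := Nat.exists_eq_succ_of_ne_zero hpos
        rw [he] at hE2 ⊢
        have hne : (t : k) - e ≠ 0 := by
          rw [sub_ne_zero]; exact Nat.cast_injective.ne (by omega)
        simp only [Nat.succ_eq_add_one, Nat.add_sub_cancel, cc]
        push_cast
        field_simp
        ring
    · rw [if_neg]
      · refine Finset.sum_eq_zero fun j hj => if_neg ?_
        rintro ⟨h1, h2⟩
        rw [mem_fib] at hj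
        apply hgx
        constructor
        · intro i
          by_cases hi : i = j
          · subst hi
            right
            refine ⟨?_, Or.inl hj⟩
            rcases h2 i with h | h
            · right; rw [← h]; simp
            · exact h.1
          · simpa [hi] using h2 i
        · have := Wt_update (Wt_self.2 h1) (j := j) (a := b) (c := a) (by simp) hab.symm
          rwa [Function.update_idem, ← hj, Function.update_eq_self, hj] at this
      · rintro rfl
        exact hgx ⟨fun i => Or.inl rfl, hw⟩

section Y
variable {k τ P Q : Type*} [Field k] {t : ℕ} {π : MvPolynomial τ k →ₐ[k] MvPolynomial (P × Q) k}
  {y : (Fin t → P) → (Fin t → Q) → MvPolynomial τ k} {D : ℕ}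

theorem yt_mem_KK [NeZero D] (r : Fin t × Fin D → P) (c : Fin t × Fin D → Q)
    {w w' : Fin t × Fin D → Fin D} (hw : W0 t w) (hw' : W0 t w') (i : Fin D) :
    yt y r c w w' ∈ KK y r c i (fib w i) (fib w' i) :=
  Submodule.subset_span ⟨w, w', hw, hw', rfl, rfl, rfl⟩

theorem Dm_lift_eq {ι L : Type*} [CharZero k] [Fintype ι] [DecidableEq ι] [DecidableEq L] [Fintype L]
    (r : ι → P) (c : ι → Q) (w w' : ι → L) (a b : L) (Lc : (ι → L) → k)
    (h : ∀ x, ∑ j ∈ fib x a, Lc (Function.update x j b) = if x = w then 1 else 0) :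
    ∑ u, Lc u • ∑ j ∈ fib w' a, Dm k r c u (Function.update w' j b) = Dm k r c w w' := by
  have e1 : Dm k r c w w' = ∑ x, (∑ j ∈ fib x a, Lc (Function.update x j b)) • Dm k r c x w' := by
    simp only [h]
    simp
  rw [e1]
  simp only [Dm_intertwine, Finset.sum_smul, Finset.smul_sum]
  rw [Finset.sum_sigma', Finset.sum_sigma']
  refine Finset.sum_bij' (fun p _ => ⟨Function.update p.1 p.2 a, p.2⟩)
    (fun p _ => ⟨Function.update p.1 p.2 b, p.2⟩) ?_ ?_ ?_ ?_ ?_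
  · rintro ⟨u, j⟩ hj; simp [mem_fib]
  · rintro ⟨u, j⟩ hj; simp [mem_fib]
  · rintro ⟨u, j⟩ hj
    simp only [Finset.mem_sigma, Finset.mem_univ, true_and, mem_fib] at hj
    simp [← hj]
  · rintro ⟨u, j⟩ hj
    simp only [Finset.mem_sigma, Finset.mem_univ, true_and, mem_fib] at hj
    simp [← hj]
  · rintro ⟨u, j⟩ hj
    simp only [Finset.mem_sigma, Finset.mem_univ, true_and, mem_fib] at hj
    simp [← hj]

theorem exists_lift (hy : IsY π y) [CharZero k] [NeZero D] (r : Fin t × Fin D → P)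
    (c : Fin t × Fin D → Q) (w w' : Fin t × Fin D → Fin D)
    (h : ∃ a b, Wt t w a b ∧ Wt t w' a b) :
    ∃ f, π f = Dm k r c w w' ∧ ∀ i, (fib w i).card = t → f ∈ KK y r c i (fib w i) (fib w' i) := by
  obtain ⟨a, b, hw, hw'⟩ := h
  by_cases hab : a = b
  · subst hab
    rw [Wt_self] at hw hw'
    exact ⟨yt y r c w w', yt_pi hy r c hw hw', fun i _ => yt_mem_KK r c hw hw' i⟩
  · obtain ⟨Lc, h1, h2⟩ := exists_L (k := k) t a b hab w hw
    refine ⟨∑ u, Lc u • ∑ j ∈ fib w' a, yt y r c u (Function.update w' j b), ?_, ?_⟩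
    · rw [← Dm_lift_eq r c w w' a b Lc h2, map_sum]
      refine Finset.sum_congr rfl fun u _ => ?_
      rw [map_smul]
      by_cases hu : Lc u = 0
      · simp [hu]
      · rw [map_sum]
        congr 1
        refine Finset.sum_congr rfl fun j hj => ?_
        exact yt_pi hy r c (h1 u hu).1 (Wt_self.1 (Wt_update hw' (mem_fib.1 hj) hab))
    · intro i hi
      have hia : i ≠ a := by
        rintro rfl
        have := hw i
        rw [if_neg hab, if_pos rfl] at this; omega
      have hib : i ≠ b := by
        rintro rfl
        have := hw i
        rw [if_neg hia, if_pos rfl] at this; omega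
      refine Submodule.sum_mem _ fun u _ => ?_
      by_cases hu : Lc u = 0
      · simp [hu]
      refine Submodule.smul_mem _ _ (Submodule.sum_mem _ fun j hj => ?_)
      rw [mem_fib] at hj
      have := yt_mem_KK (y := y) r c (h1 u hu).1 (Wt_self.1 (Wt_update hw' hj hab)) i
      rwa [(h1 u hu).2 i hia hib, fib_update_ne _ _ _ _ hib,
        Finset.erase_eq_of_notMem (by rw [mem_fib, hj]; exact hia.symm)] at this

end Y

section Y
variable {k τ P Q : Type*} [Field k] {t : ℕ} {π : MvPolynomial τ k →ₐ[k] MvPolynomial (P × Q) k}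
  {y : (Fin t → P) → (Fin t → Q) → MvPolynomial τ k} {D : ℕ}

theorem exists_a (hy : IsY π y) [CharZero k] [NeZero D] (hD : 4 ≤ D) (r : Fin t × Fin D → P)
    (c : Fin t × Fin D → Q) (ψ : MvPolynomial τ k →ₗ[k] k)
    (hψ : ∀ q g : MvPolynomial τ k, g.IsHomogeneous (D - 1) → π g = 0 → ψ (q * g) = 0) :
    ∃ a : Equiv.Perm (Fin t × Fin D) → k, ∀ u v : Fin t × Fin D → Fin D, W0 t u → W0 t v →
      ψ (yt y r c u v) = ∑ σ : Equiv.Perm (Fin t × Fin D), if u ∘ σ = v then a σ else 0 := by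
  classical
  have hex : ∀ w w' : Fin t × Fin D → Fin D, ∃ f, (∃ a b, Wt t w a b ∧ Wt t w' a b) →
      (π f = Dm k r c w w' ∧
        ∀ i, (fib w i).card = t → f ∈ KK y r c i (fib w i) (fib w' i)) := by
    intro w w'
    by_cases h : ∃ a b, Wt t w a b ∧ Wt t w' a b
    · obtain ⟨f, hf⟩ := exists_lift hy r c w w' h
      exact ⟨f, fun _ => hf⟩
    · exact ⟨0, fun h' => absurd h' h⟩
  choose F hF using hex
  have hZ : ∀ a a' b : Fin D, a ≠ a' → ∀ v w : Fin t × Fin D → Fin D, Wt t v a' b → Wt t w a b →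
      ∑ j ∈ fib w a, ψ (F v (Function.update w j a')) =
        ∑ j ∈ fib v a', ψ (F (Function.update v j a) w) := by
    intro a a' b haa v w hv hw
    obtain ⟨i, hi⟩ : ∃ i : Fin D, i ∉ ({a, a', b} : Finset (Fin D)) := by
      by_contra hcon
      push Not at hcon
      have h1 : (Finset.univ : Finset (Fin D)) ⊆ {a, a', b} := fun i _ => hcon i
      have h2 := Finset.card_le_card h1
      have h3 := Finset.card_le_three (a := a) (b := a') (c := b)
      rw [Finset.card_univ, Fintype.card_fin] at h2
      omega
    simp only [Finset.mem_insert, Finset.mem_singleton, not_or] at hi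
    obtain ⟨hia, hia', hib⟩ := hi
    have hcv : (fib v i).card = t := by
      have := hv i; rwa [if_neg hib, if_neg hia'] at this
    rw [← map_sum, ← map_sum]
    have e1 : ∀ j ∈ fib w a, fib (Function.update w j a') i = fib w i := by
      intro j hj
      rw [mem_fib] at hj
      rw [fib_update_ne _ _ _ _ hia', Finset.erase_eq_of_notMem (by rw [mem_fib, hj]; exact Ne.symm hia)]
    have e2 : ∀ j ∈ fib v a', fib (Function.update v j a) i = fib v i := by
      intro j hj
      rw [mem_fib] at hj
      rw [fib_update_ne _ _ _ _ hia, Finset.erase_eq_of_notMem (by rw [mem_fib, hj]; exact Ne.symm hia')]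
    have F1 : ∀ j ∈ fib w a, _ := fun j hj => hF v (Function.update w j a')
      ⟨a', b, hv, Wt_update hw (mem_fib.1 hj) haa⟩
    have F2 : ∀ j ∈ fib v a', _ := fun j hj => hF (Function.update v j a) w
      ⟨a, b, Wt_update hv (mem_fib.1 hj) haa.symm, hw⟩
    refine KK_psi hy r c i (fib v i) (fib w i) ψ hψ _ _ (Submodule.sum_mem _ fun j hj => ?_)
      (Submodule.sum_mem _ fun j hj => ?_) ?_
    · have := (F1 j hj).2 i hcv
      rwa [e1 j hj] at this
    · have := (F2 j hj).2 i (by rw [e2 j hj]; exact hcv)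
      rwa [e2 j hj] at this
    · rw [map_sum, map_sum, Finset.sum_congr rfl (fun j hj => (F1 j hj).1),
        Finset.sum_congr rfl (fun j hj => (F2 j hj).1)]
      exact Dm_intertwine r c v w a a'
  have hcore := core (k := k) t (fun w w' => ψ (F w w')) hZ
  let Ω := {w : Fin t × Fin D → Fin D // W0 t w}
  let _ : MulAction (Equiv.Perm (Fin t × Fin D)) Ω :=
    { smul := fun g w => ⟨w.1 ∘ (g⁻¹ : Equiv.Perm _), W0_comp w.2 _⟩
      one_smul := fun w => Subtype.ext rfl
      mul_smul := fun g h w => by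
        apply Subtype.ext
        change w.1 ∘ ((g * h)⁻¹ : Equiv.Perm _) = (w.1 ∘ (h⁻¹ : Equiv.Perm _)) ∘ (g⁻¹ : Equiv.Perm _)
        rw [mul_inv_rev]; rfl }
  have hsm : ∀ (g : Equiv.Perm (Fin t × Fin D)) (w : Ω), (g • w).1 = w.1 ∘ (g⁻¹ : Equiv.Perm _) :=
    fun _ _ => rfl
  have hiff : ∀ (g : Equiv.Perm (Fin t × Fin D)) (w v : Ω),
      g • w = v ↔ w.1 ∘ (g⁻¹ : Equiv.Perm _) = v.1 := fun _ _ _ => Subtype.ext_iff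
  obtain ⟨a, ha⟩ := double_comm (k := k) (G := Equiv.Perm (Fin t × Fin D)) (Ω := Ω)
    (fun u v => ψ (F u.1 v.1)) (by
      intro w w' u v
      have := hcore _ 0 0 w.1 w'.1 w.2 (Wt_self.2 w'.2) le_rfl u.1 v.1 u.2 (Wt_self.2 v.2)
      rw [← Equiv.sum_comp (Equiv.inv _), ← Equiv.sum_comp (Equiv.inv _) (fun σ => ite (_ ∘ _ = u.1) _ _)] at this
      simp only [hiff, hsm]
      simp only [Equiv.inv_apply] at this
      convert this)
  refine ⟨a, fun u v hu hv => ?_⟩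
  have h1 : ψ (yt y r c u v) = ψ (F u v) := by
    have hh := hF u v ⟨0, 0, Wt_self.2 hu, Wt_self.2 hv⟩
    exact KK_psi hy r c 0 (fib u 0) (fib v 0) ψ hψ _ _ (yt_mem_KK r c hu hv 0)
      (hh.2 0 (hu 0)) (by rw [hh.1, yt_pi hy r c hu hv])
  rw [h1, ha ⟨u, hu⟩ ⟨v, hv⟩]
  refine Finset.sum_congr rfl fun g _ => ?_
  congr 1
  apply propext
  rw [hiff]
  constructor
  · intro h
    simp only at h
    rw [← h, Function.comp_assoc, ← Equiv.Perm.coe_mul]; simp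
  · intro h
    simp only
    rw [← h, Function.comp_assoc, ← Equiv.Perm.coe_mul]; simp

end Y

theorem prod_X_eq {k ι V : Type*} [Field k] [Fintype ι] (q : ι → V) :
    (∏ i, X (q i) : MvPolynomial V k) = monomial (∑ i, Finsupp.single (q i) 1) 1 := by
  rw [monomial_sum_one]; rfl

theorem exists_beta {k ι V : Type*} [Field k] [Fintype ι] (B : (ι → V) → k)
    (hB : ∀ q (g : Equiv.Perm ι), B (q ∘ g) = B q) :
    ∃ β : MvPolynomial V k →ₗ[k] k, ∀ q : ι → V, β (∏ i, X (q i)) = B q := by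
  classical
  let M : (ι → V) → V →₀ ℕ := fun q => ∑ i, Finsupp.single (q i) 1
  let f : (V →₀ ℕ) → k := fun d => if h : ∃ q, M q = d then B h.choose else 0
  refine ⟨(basisMonomials V k).constr k f, fun q => ?_⟩
  have h1 : (∏ i, X (q i) : MvPolynomial V k) = basisMonomials V k (M q) := by
    rw [prod_X_eq, coe_basisMonomials]
  rw [h1, Module.Basis.constr_basis]
  have hex : ∃ q', M q' = M q := ⟨q, rfl⟩
  simp only [f]
  rw [dif_pos hex]
  have hc : ∀ (q : ι → V) x, M q x = (fib q x).card := by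
    intro q x
    simp only [M, Finsupp.finsetSum_apply, Finsupp.single_apply, fib, Finset.card_filter]
  obtain ⟨τ, hτ⟩ := exists_perm_of_fib q hex.choose (fun x => by
    rw [← hc, ← hc, hex.choose_spec])
  rw [← hτ, hB]

section Y
variable {k τ P Q : Type*} [Field k] {t : ℕ} {π : MvPolynomial τ k →ₐ[k] MvPolynomial (P × Q) k}
  {y : (Fin t → P) → (Fin t → Q) → MvPolynomial τ k} {D : ℕ}

theorem psi_zero (hy : IsY π y) [CharZero k] [NeZero D] (hD : 4 ≤ D) (ψ : MvPolynomial τ k →ₗ[k] k)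
    (hψ : ∀ q g : MvPolynomial τ k, g.IsHomogeneous (D - 1) → π g = 0 → ψ (q * g) = 0)
    (p : MvPolynomial τ k) (hp : p.IsHomogeneous D) (hp0 : π p = 0) : ψ p = 0 := by
  classical
  choose a ha using fun r c => exists_a hy hD r c ψ hψ
  let B : (Fin t × Fin D → P) → (Fin t × Fin D → Q) → k := fun r c =>
    ∑ g : Equiv.Perm (Fin t × Fin D), ∑ σ : Equiv.Perm (Fin t × Fin D), sg k σ * a (r ∘ g) (c ∘ g ∘ σ) σ
  have hB : ∀ r c (g' : Equiv.Perm (Fin t × Fin D)), B (r ∘ g') (c ∘ g') = B r c := by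
    intro r c g'
    simp only [B]
    rw [← Equiv.sum_comp (Equiv.mulLeft g') (fun g : Equiv.Perm (Fin t × Fin D) => ∑ σ : Equiv.Perm (Fin t × Fin D), sg k σ * a (r ∘ g) (c ∘ g ∘ σ) σ)]
    rfl
  obtain ⟨β, hβ⟩ := exists_beta (k := k) (fun q : Fin t × Fin D → P × Q =>
    B (Prod.fst ∘ q) (Prod.snd ∘ q)) (fun q g => hB (Prod.fst ∘ q) (Prod.snd ∘ q) g)
  have key : ∀ r c, ((Fintype.card (Equiv.Perm (Fin t × Fin D)) : k) * (Fintype.card (Equiv.Perm (Fin t × Fin D)) : k)) * ψ (YY y D r c) =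
      β (π (YY y D r c)) := by
    intro r c
    have e1 : β (π (YY y D r c)) =
        ∑ η : Equiv.Perm (Fin t × Fin D), if Prod.snd ∘ η = (Prod.snd : Fin t × Fin D → Fin D) then
          sg k η * B r (c ∘ (η⁻¹ : Equiv.Perm (Fin t × Fin D))) else 0 := by
      rw [YY_pi hy, Dm_eq, map_sum]
      refine Finset.sum_congr rfl fun η _ => ?_
      split_ifs with h
      · rw [map_smul, smul_eq_mul]
        have := hβ (fun i => (r (η i), c i))
        rw [this, ← hB r _ η]
        congr 2
        funext i; simp
      · simp
    have e2 : ∀ g h : Equiv.Perm (Fin t × Fin D), ψ (YY y D r c) = ∑ σ : Equiv.Perm (Fin t × Fin D),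
        if Prod.snd ∘ (g * σ * h⁻¹ : Equiv.Perm (Fin t × Fin D)) = (Prod.snd : Fin t × Fin D → Fin D) then
          sg k (g * σ * h⁻¹) * (sg k σ * a (r ∘ g) (c ∘ h) σ) else 0 := by
      intro g h
      have h1 := ha (r ∘ g) (c ∘ h) _ _ (W0_comp W0_snd g) (W0_comp W0_snd h)
      rw [yt_equiv hy, map_smul, smul_eq_mul] at h1
      have h2 : ψ (YY y D r c) = sg k g * sg k h * (sg k g * sg k h * ψ (YY y D r c)) := by
        linear_combination -ψ (YY y D r c) * (sg k h * sg k h * sg_mul_self k g + sg_mul_self k h)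
      rw [h2, h1, Finset.mul_sum]
      refine Finset.sum_congr rfl fun σ _ => ?_
      have h3 : ((Prod.snd : Fin t × Fin D → Fin D) ∘ g) ∘ σ = Prod.snd ∘ h ↔
          Prod.snd ∘ (g * σ * h⁻¹ : Equiv.Perm (Fin t × Fin D)) = (Prod.snd : Fin t × Fin D → Fin D) := by
        constructor
        · intro hh
          have := congrArg (fun f => f ∘ (h⁻¹ : Equiv.Perm (Fin t × Fin D))) hh
          simp only [Function.comp_assoc, ← Equiv.Perm.coe_mul] at this
          simpa [mul_assoc] using this
        · intro hh
          have := congrArg (fun f => f ∘ h) hh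
          simp only [Function.comp_assoc, ← Equiv.Perm.coe_mul] at this
          simpa [mul_assoc, Function.comp_assoc] using this
      simp only [h3]
      rw [mul_ite, mul_zero]
      congr 1
      rw [sg_mul, sg_mul, sg_inv]
      linear_combination -sg k g * sg k h * a (r ∘ g) (c ∘ h) σ * sg_mul_self k σ
    have e3 : ((Fintype.card (Equiv.Perm (Fin t × Fin D)) : k) * (Fintype.card (Equiv.Perm (Fin t × Fin D)) : k)) * ψ (YY y D r c) =
        ∑ g : Equiv.Perm (Fin t × Fin D), ∑ h : Equiv.Perm (Fin t × Fin D), ψ (YY y D r c) := by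
      simp [mul_assoc]
    rw [e3, e1]
    rw [Finset.sum_congr rfl fun g _ => Finset.sum_congr rfl fun h _ => e2 g h]
    have e4 : ∀ g σ : Equiv.Perm (Fin t × Fin D), ∑ h : Equiv.Perm (Fin t × Fin D), (if Prod.snd ∘ (g * σ * h⁻¹ : Equiv.Perm (Fin t × Fin D)) =
          (Prod.snd : Fin t × Fin D → Fin D) then
          sg k (g * σ * h⁻¹) * (sg k σ * a (r ∘ g) (c ∘ h) σ) else 0) =
        ∑ η : Equiv.Perm (Fin t × Fin D), if Prod.snd ∘ η = (Prod.snd : Fin t × Fin D → Fin D) then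
          sg k η * (sg k σ * a (r ∘ g) (c ∘ (η⁻¹ * (g * σ) : Equiv.Perm (Fin t × Fin D))) σ) else 0 := by
      intro g σ
      rw [← Equiv.sum_comp ((Equiv.inv (Equiv.Perm (Fin t × Fin D))).trans (Equiv.mulRight (g * σ)))]
      refine Finset.sum_congr rfl fun η _ => ?_
      simp [mul_assoc]
    calc _ = ∑ g : Equiv.Perm (Fin t × Fin D), ∑ σ : Equiv.Perm (Fin t × Fin D), ∑ h : Equiv.Perm (Fin t × Fin D), (if Prod.snd ∘ (g * σ * h⁻¹ : Equiv.Perm (Fin t × Fin D)) =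
          (Prod.snd : Fin t × Fin D → Fin D) then
          sg k (g * σ * h⁻¹) * (sg k σ * a (r ∘ g) (c ∘ h) σ) else 0) :=
          Finset.sum_congr rfl fun g _ => Finset.sum_comm
      _ = ∑ g : Equiv.Perm (Fin t × Fin D), ∑ σ : Equiv.Perm (Fin t × Fin D), ∑ η : Equiv.Perm (Fin t × Fin D), if Prod.snd ∘ η = (Prod.snd : Fin t × Fin D → Fin D) then
          sg k η * (sg k σ * a (r ∘ g) (c ∘ (η⁻¹ * (g * σ) : Equiv.Perm (Fin t × Fin D))) σ) else 0 := by
          simp only [e4]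
      _ = ∑ η : Equiv.Perm (Fin t × Fin D), ∑ g : Equiv.Perm (Fin t × Fin D), ∑ σ : Equiv.Perm (Fin t × Fin D), if Prod.snd ∘ η = (Prod.snd : Fin t × Fin D → Fin D) then
          sg k η * (sg k σ * a (r ∘ g) (c ∘ (η⁻¹ * (g * σ) : Equiv.Perm (Fin t × Fin D))) σ) else 0 := by
          rw [Finset.sum_congr rfl fun g _ => Finset.sum_comm, Finset.sum_comm]
      _ = _ := by
          refine Finset.sum_congr rfl fun η _ => ?_
          split_ifs with h
          · simp only [B, Finset.mul_sum]; rfl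
          · simp
  have hN : ((Fintype.card (Equiv.Perm (Fin t × Fin D)) : k) * (Fintype.card (Equiv.Perm (Fin t × Fin D)) : k)) ≠ 0 := by
    simp [Fintype.card_ne_zero]
  have hall : ∀ f ∈ Submodule.span k (Set.range fun rc : (Fin t × Fin D → P) × (Fin t × Fin D → Q) =>
      YY y D rc.1 rc.2), ((Fintype.card (Equiv.Perm (Fin t × Fin D)) : k) * (Fintype.card (Equiv.Perm (Fin t × Fin D)) : k)) * ψ f = β (π f) := by
    intro f hf
    induction hf using Submodule.span_induction with
    | mem f hf =>
      obtain ⟨rc, rfl⟩ := hf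
      exact key _ _
    | zero => simp
    | add f g _ _ hf hg => rw [map_add, mul_add, hf, hg, map_add, map_add]
    | smul s f _ hf => rw [map_smul, map_smul, map_smul, ← hf, smul_eq_mul, smul_eq_mul]; ring
  have hall := hall p (YY_span hy p hp)
  rw [hp0, map_zero] at hall
  exact (mul_eq_zero.1 hall).resolve_left hN

end Y

theorem isY_yv (k : Type*) [Field k] (t m n : ℕ) : IsY (minorPresentation k t m n) (yv k t m n) where
  pi := yv_pi k t m n
  alt := yv_alt k t m n
  hom := yv_hom k t m n
  zero := yv_zero k t m n
  gen := yv_X k t m n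

theorem genericMinor_hom (k : Type*) [Field k] (m n t : ℕ) (I : Finset (Fin m)) (J : Finset (Fin n))
    (hI : I.card = t) (hJ : J.card = t) : (genericMinor k m n t I J hI hJ).IsHomogeneous t := by
  unfold genericMinor
  rw [Matrix.det_apply']
  refine IsHomogeneous.sum _ _ _ fun σ _ => ?_
  rw [sign_mul_eq_sg k]
  refine (homogeneousSubmodule _ k _).smul_mem _ ?_
  have := IsHomogeneous.prod (Finset.univ : Finset (Fin t)) (fun i => (X ((↑(I.orderIsoOfFin hI (σ i)) : Fin m),
    (↑(J.orderIsoOfFin hJ i) : Fin n)) : MvPolynomial (Fin m × Fin n) k)) (fun _ => 1)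
    (fun i _ => isHomogeneous_X k _)
  simpa using this

theorem pres_hom (k : Type*) [Field k] (t m n : ℕ) (p : MvPolynomial (MinorIndex t m n) k) (D : ℕ)
    (hp : p.IsHomogeneous D) : (minorPresentation k t m n p).IsHomogeneous (t * D) :=
  hp.aeval _ (fun _ => genericMinor_hom k m n t _ _ _ _)

theorem comp_mem (k : Type*) [Field k] (t m n : ℕ) (ht : 1 ≤ t) (p : MvPolynomial (MinorIndex t m n) k)
    (hp : minorPresentation k t m n p = 0) (d : ℕ) :
    minorPresentation k t m n (homogeneousComponent d p) = 0 := by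
  by_cases hd : p.totalDegree < d
  · rw [homogeneousComponent_eq_zero _ _ hd, map_zero]
  have h1 := congrArg (homogeneousComponent (t * d)) hp
  rw [← sum_homogeneousComponent p, map_sum, map_sum, map_zero] at h1
  rw [Finset.sum_eq_single d] at h1
  · rwa [homogeneousComponent_of_mem (pres_hom k t m n _ d (homogeneousComponent_isHomogeneous d p)),
      if_pos rfl] at h1
  · intro e _ hed
    rw [homogeneousComponent_of_mem (pres_hom k t m n _ e (homogeneousComponent_isHomogeneous e p)),
      if_neg]
    intro h
    exact hed (Nat.eq_of_mul_eq_mul_left (by omega) h).symm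
  · intro h; simp at h; omega

theorem mem_rel (k : Type*) [Field k] (t m n : ℕ) (p : MvPolynomial (MinorIndex t m n) k) :
    p ∈ minorRelations k t m n ↔ minorPresentation k t m n p = 0 := by
  unfold minorRelations
  rw [RingHom.mem_ker]; rfl

theorem gen_three (k : Type*) [Field k] [CharZero k] (t m n B : ℕ) (ht : 1 ≤ t) (hB : 3 ≤ B) :
    GeneratedInDegreesLE (minorRelations k t m n) B := by
  unfold GeneratedInDegreesLE
  set I' := Ideal.span {x | x ∈ minorRelations k t m n ∧ x.totalDegree ≤ B} with hI'
  have key : ∀ (D : ℕ) (p : MvPolynomial (MinorIndex t m n) k), p.IsHomogeneous D →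
      minorPresentation k t m n p = 0 → p ∈ I' := by
    intro D
    induction D with
    | zero =>
      intro p hp h0
      exact Ideal.subset_span ⟨(mem_rel k t m n p).2 h0, hp.totalDegree_le.trans (by omega)⟩
    | succ D ih =>
      intro p hp h0
      by_cases hD : D + 1 ≤ 3
      · exact Ideal.subset_span ⟨(mem_rel k t m n p).2 h0, hp.totalDegree_le.trans (by omega)⟩
      · by_contra hcon
        have hcon' : p ∉ I'.restrictScalars k := hcon
        obtain ⟨ψ, h1, h2⟩ := Submodule.exists_le_ker_of_notMem hcon'
        refine h1 (psi_zero (isY_yv k t m n) (by omega) ψ ?_ p hp h0)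
        intro q g hg hg0
        have : q * g ∈ I' := I'.mul_mem_left q (ih g hg hg0)
        exact h2 this
  apply le_antisymm
  · intro p hp
    rw [mem_rel] at hp
    rw [← sum_homogeneousComponent p]
    exact Ideal.sum_mem _ fun d _ =>
      key d _ (homogeneousComponent_isHomogeneous d p) (comp_mem k t m n ht p hp d)
  · rw [hI', Ideal.span_le]
    exact fun x hx => hx.1

theorem inj_one (k : Type*) [Field k] (m n : ℕ) : Function.Injective (minorPresentation k 1 m n) := by
  let φ : MinorIndex 1 m n → Fin m × Fin n := fun p =>
    ((p.1.1.orderIsoOfFin p.2.1 0 : Fin m), (p.1.2.orderIsoOfFin p.2.2 0 : Fin n))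
  have hφ : Function.Injective φ := by
    rintro ⟨⟨I, J⟩, hI, hJ⟩ ⟨⟨I', J'⟩, hI', hJ'⟩ h
    have h1 : ∀ {s : ℕ} (I I' : Finset (Fin s)) (hI : I.card = 1) (hI' : I'.card = 1),
        (I.orderIsoOfFin hI 0 : Fin s) = (I'.orderIsoOfFin hI' 0 : Fin s) → I = I' := by
      intro s I I' hI hI' hh
      have m1 := (I.orderIsoOfFin hI 0).2
      have m2 := (I'.orderIsoOfFin hI' 0).2
      rw [hh] at m1
      generalize ((I'.orderIsoOfFin hI' 0 : I') : Fin s) = z at m1 m2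
      obtain ⟨x, rfl⟩ := Finset.card_eq_one.1 hI
      obtain ⟨x', rfl⟩ := Finset.card_eq_one.1 hI'
      rw [Finset.mem_singleton] at m1 m2
      rw [← m1, ← m2]
    apply Subtype.ext
    exact Prod.ext (h1 I I' hI hI' (congrArg Prod.fst h)) (h1 J J' hJ hJ' (congrArg Prod.snd h))
  have : minorPresentation k 1 m n = rename φ := by
    apply algHom_ext
    intro p
    rw [minorPresentation, aeval_X, rename_X, genericMinor, Matrix.det_fin_one]
    rfl
  rw [this]
  exact rename_injective φ hφ

/-- Every minimal generator of the ideal of relations of the `t`-minors of a generic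
`m × n` matrix has degree at most `m(m+t) − m − ⌊m²/t⌋ + 1`. -/
theorem minorRelations_degree_bound (k : Type*) [Field k] [CharZero k]
    (t m n : ℕ) (ht : 1 ≤ t) (htm : t ≤ m) (hmn : m ≤ n) :
    GeneratedInDegreesLE (minorRelations k t m n) (m * (m + t) - m - m ^ 2 / t + 1) := by
  by_cases h1 : t = 1
  · subst h1
    unfold GeneratedInDegreesLE
    apply le_antisymm
    · intro p hp
      rw [mem_rel] at hp
      have : p = 0 := inj_one k m n (by rw [hp, map_zero])
      rw [this]; exact Ideal.zero_mem _
    · rw [Ideal.span_le]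
      exact fun x hx => hx.1
  · refine gen_three k t m n _ ht ?_
    have h2 : m ^ 2 / t ≤ m ^ 2 := Nat.div_le_self _ _
    have h3 : m * 2 ≤ m * t := Nat.mul_le_mul_left m (by omega)
    have h4 : m * (m + t) = m ^ 2 + m * t := by ring
    omega
end
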